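/- Let Σ ⊆ ℝ^{d−1} be open, Λ ⊆ ℝ an open interval, Y = Σ×Λ, and write y = (y₀,y_d) ∈ Y, η = (η₀,η_d) ∈ ℝ^{d−1}×ℝ. Let ρ > 0, δ < 1, m ∈ ℝ, and let ã ∈ S^m_{ρ,δ,δ}(Y×Y×ℝ^d) satisfy, for some ε > 0, ã(y,y',η) = 0 whenever |η_d| ≥ (1−ε)|η|. Define ã^♮(y₀,y₀',η₀; y_d,y_d') = (2π)^{−1} ∫_{−∞}^{∞} ã(y₀,y_d, y₀',y_d', η₀,η_d) e^{i(y_d−y_d')η_d} dη_d. Then: (i) the integrand vanishes for |η_d| ≥ c(ε)|η₀|, so the integral is over a compact interval; (ii) for each (y_d,y_d') ∈ Λ×Λ, the function ã^♮(·,·,·; y_d,y_d') belongs to S^{m+1}_{ρ,δ,δ}(Σ×Σ×ℝ^{d−1}), with seminorms bounded uniformly for (y_d,y_d') in compact subsets of Λ×Λ; (iii) every derivative ∂_{η₀}^α ∂_{y₀}^β ∂_{y₀'}^{β'} ã^♮ is continuous in (y_d,y_d'), uniformly for y₀, y₀' in compact subsets of Σ and |η₀| ≤ R₀, for any R₀ >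 0; (iv) for all u, v ∈ C_0^∞(Y), denoting by Ã the PDO on Y with amplitude ã and by Ã^♮(y_d,y_d') the PDO on Σ with amplitude ã^♮(·,·,·;y_d,y_d'), one has (Ãu, v)_{L²(Y)} = ∫_Λ ∫_Λ ( Ã^♮(y_d,y_d') u(·,y_d'), v(·,y_d) )_{L²(Σ)} dy_d dy_d'. -/

import Mathlib

open MeasureTheory Filter Topology

noncomputable section

/-- Dot product on `ℝ^d`. -/
def dotp {d : ℕ} (x ξ : Fin d → ℝ) : ℝ := ∑ i, x i * ξ i

/-- Directional derivative of a function between normed spaces. -/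
def dirDeriv {E F : Type*} [NormedAddCommGroup E] [NormedSpace ℝ E]
    [NormedAddCommGroup F] [NormedSpace ℝ F] (v : E) (f : E → F) : E → F :=
  fun x => fderiv ℝ f x v

/-- Iterated directional derivatives along a list of directions. -/
def dirDerivList {E F : Type*} [NormedAddCommGroup E] [NormedSpace ℝ E]
    [NormedAddCommGroup F] [NormedSpace ℝ F] : List E → (E → F) → E → F
  | [], f => f
  | v :: l, f => dirDeriv v (dirDerivList l f)

/-- Multi-index partial derivative `∂^α` with respect to a family of directions. -/
def mpderivB {n : ℕ} {E F : Type*} [NormedAddCommGroup E] [NormedSpace ℝ E]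
    [NormedAddCommGroup F] [NormedSpace ℝ F] (b : Fin n → E) (α : Fin n → ℕ)
    (f : E → F) : E → F :=
  dirDerivList ((List.finRange n).flatMap fun i => List.replicate (α i) (b i)) f

/-- Multi-index partial derivative `∂^α` on `ℝ^d`. -/
def mpderiv {d : ℕ} {F : Type*} [NormedAddCommGroup F] [NormedSpace ℝ F]
    (α : Fin d → ℕ) (f : (Fin d → ℝ) → F) : (Fin d → ℝ) → F :=
  mpderivB (fun i => Pi.single i 1) α f

/-- Order `|α|` of a multi-index. -/
def mOrder {d : ℕ} (α : Fin d → ℕ) : ℕ := ∑ i, α i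

/-- Factorial `α!` of a multi-index. -/
def mFactorial {d : ℕ} (α : Fin d → ℕ) : ℕ := ∏ i, (α i).factorial

/-- Power `ζ^α`. -/
def mpow {d : ℕ} (ζ : Fin d → ℝ) (α : Fin d → ℕ) : ℝ := ∏ i, ζ i ^ α i

/-- The finset of multi-indices of order `< N`. -/
def mIdxLt (d N : ℕ) : Finset (Fin d → ℕ) :=
  (Fintype.piFinset fun _ : Fin d => Finset.range N).filter fun α => mOrder α < N

/-- The finset of multi-indices of order `= N`. -/
def mIdxEq (d N : ℕ) : Finset (Fin d → ℕ) :=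
  (Fintype.piFinset fun _ : Fin d => Finset.range (N + 1)).filter fun α => mOrder α = N

/-- Hörmander symbol class `S^m_{ρ,δ}(X × ℝ^d)`. -/
def IsSymbol {d : ℕ} (X : Set (Fin d → ℝ)) (m ρ δ : ℝ)
    (a : (Fin d → ℝ) → (Fin d → ℝ) → ℂ) : Prop :=
  ContDiffOn ℝ (⊤ : ℕ∞) (fun q : (Fin d → ℝ) × (Fin d → ℝ) => a q.1 q.2) (X ×ˢ Set.univ) ∧
  ∀ (α β : Fin d → ℕ) (K : Set (Fin d → ℝ)), IsCompact K → K ⊆ X →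
    ∃ C : ℝ, ∀ x ∈ K, ∀ ξ : Fin d → ℝ,
      ‖mpderiv β (fun y => mpderiv α (fun η => a y η) ξ) x‖ ≤
        C * (1 + ‖ξ‖) ^ (m - ρ * (mOrder α : ℝ) + δ * (mOrder β : ℝ))

/-- Hörmander amplitude class `S^m_{ρ,δ,δ}(X × X × ℝ^d)`. -/
def IsAmplitude {d : ℕ} (X : Set (Fin d → ℝ)) (m ρ δ : ℝ)
    (a : (Fin d → ℝ) → (Fin d → ℝ) → (Fin d → ℝ) → ℂ) : Prop :=
  ContDiffOn ℝ (⊤ : ℕ∞)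
    (fun q : ((Fin d → ℝ) × (Fin d → ℝ)) × (Fin d → ℝ) => a q.1.1 q.1.2 q.2)
    ((X ×ˢ X) ×ˢ Set.univ) ∧
  ∀ (α β β' : Fin d → ℕ) (K : Set (Fin d → ℝ)), IsCompact K → K ⊆ X →
    ∃ C : ℝ, ∀ x ∈ K, ∀ x' ∈ K, ∀ ξ : Fin d → ℝ,
      ‖mpderiv β (fun y => mpderiv β' (fun y' => mpderiv α (fun η => a y y' η) ξ) x') x‖ ≤
        C * (1 + ‖ξ‖) ^ (m - ρ * (mOrder α : ℝ) + δ * ((mOrder β : ℝ) + (mOrder β' : ℝ)))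

/-- `C₀^∞(X)` test functions. -/
def IsTestFun {d : ℕ} (X : Set (Fin d → ℝ)) (u : (Fin d → ℝ) → ℂ) : Prop :=
  ContDiff ℝ (⊤ : ℕ∞) u ∧ HasCompactSupport u ∧ tsupport u ⊆ X

/-- Fourier transform `(2π)^{-d/2} ∫ e^{-i⟨x,ξ⟩} u(x) dx`. -/
def fourierHat {d : ℕ} (u : (Fin d → ℝ) → ℂ) (ξ : Fin d → ℝ) : ℂ :=
  (((2 * Real.pi) ^ (-(d : ℝ) / 2) : ℝ) : ℂ) *
    ∫ x : Fin d → ℝ, Complex.exp (-(Complex.I * (dotp x ξ : ℂ))) * u x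

/-- Pseudo-differential operator with symbol `a`. -/
def Op {d : ℕ} (a : (Fin d → ℝ) → (Fin d → ℝ) → ℂ) (u : (Fin d → ℝ) → ℂ) :
    (Fin d → ℝ) → ℂ := fun x =>
  (((2 * Real.pi) ^ (-(d : ℝ) / 2) : ℝ) : ℂ) *
    ∫ ξ : Fin d → ℝ, Complex.exp (Complex.I * (dotp x ξ : ℂ)) * a x ξ * fourierHat u ξ

/-- Pseudo-differential operator with amplitude `a` (iterated integral). -/
def OpAmp {d : ℕ} (a : (Fin d → ℝ) → (Fin d → ℝ) → (Fin d → ℝ) → ℂ)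
    (u : (Fin d → ℝ) → ℂ) : (Fin d → ℝ) → ℂ := fun x =>
  (((2 * Real.pi) ^ (-(d : ℝ)) : ℝ) : ℂ) *
    ∫ ξ : Fin d → ℝ, ∫ x' : Fin d → ℝ,
      Complex.exp (Complex.I * (dotp (x - x') ξ : ℂ)) * a x x' ξ * u x'

/-- The formal adjoint `A*` of the PDO with symbol `a`. -/
def OpAdj {d : ℕ} (a : (Fin d → ℝ) → (Fin d → ℝ) → ℂ) (u : (Fin d → ℝ) → ℂ) :
    (Fin d → ℝ) → ℂ := fun x =>
  (((2 * Real.pi) ^ (-(d : ℝ)) : ℝ) : ℂ) *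
    ∫ ξ : Fin d → ℝ, ∫ x' : Fin d → ℝ,
      Complex.exp (Complex.I * (dotp (x - x') ξ : ℂ)) * (starRingEnd ℂ) (a x' ξ) * u x'

/-- Gradient of a real-valued function on `ℝ^d`. -/
def gradR {d : ℕ} (f : (Fin d → ℝ) → ℝ) (x : Fin d → ℝ) : Fin d → ℝ :=
  fun i => fderiv ℝ f x (Pi.single i 1)

end
/-- The standard basis of `ℝ^k × ℝ` (coordinates `(y₀, y_d)`). -/
noncomputable def basisP (k : ℕ) : Fin (k + 1) → (Fin k → ℝ) × ℝ :=
  Fin.lastCases ((0 : Fin k → ℝ), (1 : ℝ)) (fun j => (Pi.single j 1, (0 : ℝ)))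

/-- The Euclidean norm of `η = (η₀, η_d) ∈ ℝ^k × ℝ`. -/
noncomputable def eNormP {k : ℕ} (η : (Fin k → ℝ) × ℝ) : ℝ :=
  Real.sqrt ((∑ i, η.1 i ^ 2) + η.2 ^ 2)

/-- The dot product on `ℝ^k × ℝ`. -/
def dotP {k : ℕ} (w w' : (Fin k → ℝ) × ℝ) : ℝ := dotp w.1 w'.1 + w.2 * w'.2

/-- Hörmander amplitude class `S^m_{ρ,δ,δ}(Y × Y × ℝ^{k+1})` in the split coordinates
`y = (y₀, y_d) ∈ ℝ^k × ℝ`. -/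
def IsAmplitudeP {k : ℕ} (Y : Set ((Fin k → ℝ) × ℝ)) (m ρ δ : ℝ)
    (a : ((Fin k → ℝ) × ℝ) → ((Fin k → ℝ) × ℝ) → ((Fin k → ℝ) × ℝ) → ℂ) : Prop :=
  ContDiffOn ℝ (⊤ : ℕ∞)
    (fun q : (((Fin k → ℝ) × ℝ) × ((Fin k → ℝ) × ℝ)) × ((Fin k → ℝ) × ℝ) =>
      a q.1.1 q.1.2 q.2) ((Y ×ˢ Y) ×ˢ Set.univ) ∧
  ∀ (α β β' : Fin (k + 1) → ℕ) (K : Set ((Fin k → ℝ) × ℝ)), IsCompact K → K ⊆ Y →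
    ∃ C : ℝ, ∀ y ∈ K, ∀ y' ∈ K, ∀ η : (Fin k → ℝ) × ℝ,
      ‖mpderivB (basisP k) β (fun w => mpderivB (basisP k) β'
          (fun w' => mpderivB (basisP k) α (fun e => a w w' e) η) y') y‖ ≤
        C * (1 + eNormP η) ^ (m - ρ * (mOrder α : ℝ) + δ * ((mOrder β : ℝ) + (mOrder β' : ℝ)))

/-- PDO with amplitude `a` on an open subset of `ℝ^k × ℝ` (iterated integral). -/
noncomputable def OpAmpP {k : ℕ}
    (a : ((Fin k → ℝ) × ℝ) → ((Fin k → ℝ) × ℝ) → ((Fin k → ℝ) × ℝ) → ℂ)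
    (u : ((Fin k → ℝ) × ℝ) → ℂ) : ((Fin k → ℝ) × ℝ) → ℂ := fun w =>
  (((2 * Real.pi) ^ (-((k : ℝ) + 1)) : ℝ) : ℂ) *
    ∫ η : (Fin k → ℝ) × ℝ, ∫ w' : (Fin k → ℝ) × ℝ,
      Complex.exp (Complex.I * (dotP (w - w') η : ℂ)) * a w w' η * u w'

open MeasureTheory Filter Topology

section general
variable {E E' F : Type*} [NormedAddCommGroup E] [NormedSpace ℝ E]
  [NormedAddCommGroup E'] [NormedSpace ℝ E']
  [NormedAddCommGroup F] [NormedSpace ℝ F]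

theorem dirDerivList_append (l₁ l₂ : List E) (f : E → F) :
    dirDerivList (l₁ ++ l₂) f = dirDerivList l₁ (dirDerivList l₂ f) := by
  induction l₁ with
  | nil => rfl
  | cons v l ih => simp only [List.cons_append, dirDerivList, ih]

theorem dirDerivList_congr (l : List E) {f g : E → F} {U : Set E} (hU : IsOpen U)
    (h : ∀ x ∈ U, f x = g x) : ∀ x ∈ U, dirDerivList l f x = dirDerivList l g x := by
  induction l with
  | nil => exact h
  | cons v l ih =>
    intro x hx
    simp only [dirDerivList, dirDeriv]
    have : dirDerivList l f =ᶠ[𝓝 x] dirDerivList l g := by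
      filter_upwards [hU.mem_nhds hx] with y hy using ih y hy
    rw [this.fderiv_eq]

theorem dirDerivList_zero (l : List E) : dirDerivList l (fun _ : E => (0 : F)) = fun _ => 0 := by
  induction l with
  | nil => rfl
  | cons v l ih => simp only [dirDerivList, ih]; funext x; simp [dirDeriv]

theorem dirDerivList_eq_zero (l : List E) {f : E → F} {U : Set E} (hU : IsOpen U)
    (h : ∀ x ∈ U, f x = 0) : ∀ x ∈ U, dirDerivList l f x = 0 := by
  intro x hx
  rw [dirDerivList_congr l hU (g := fun _ => 0) h x hx, dirDerivList_zero]

theorem dirDeriv_contDiffOn (v : E) {f : E → F} {U : Set E} (hU : IsOpen U)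
    (hf : ContDiffOn ℝ (⊤ : ℕ∞) f U) : ContDiffOn ℝ (⊤ : ℕ∞) (dirDeriv v f) U := by
  have := hf.fderiv_of_isOpen (m := (⊤ : ℕ∞)) hU (by simp)
  exact this.clm_apply contDiffOn_const

theorem dirDerivList_contDiffOn (l : List E) {f : E → F} {U : Set E} (hU : IsOpen U)
    (hf : ContDiffOn ℝ (⊤ : ℕ∞) f U) : ContDiffOn ℝ (⊤ : ℕ∞) (dirDerivList l f) U := by
  induction l with
  | nil => exact hf
  | cons v l ih => exact dirDeriv_contDiffOn v hU ih

theorem dirDerivList_comp (L : E →L[ℝ] E') (c : E') (l : List E) {f : E' → F} {U : Set E'}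
    (hU : IsOpen U) (hf : ContDiffOn ℝ (⊤ : ℕ∞) f U) :
    ∀ x, c + L x ∈ U →
      dirDerivList l (fun x => f (c + L x)) x = dirDerivList (l.map L) f (c + L x) := by
  induction l with
  | nil => intro x _; rfl
  | cons v l ih =>
    intro x hx
    simp only [dirDerivList, dirDeriv, List.map_cons]
    have hop : IsOpen ((fun x => c + L x) ⁻¹' U) := hU.preimage (by fun_prop)
    have : dirDerivList l (fun x => f (c + L x)) =ᶠ[𝓝 x]
        (dirDerivList (l.map L) f) ∘ (fun x => c + L x) := by
      filter_upwards [hop.mem_nhds hx] with y hy using ih y hy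
    rw [this.fderiv_eq]
    have hd : DifferentiableAt ℝ (dirDerivList (l.map L) f) (c + L x) :=
      ((dirDerivList_contDiffOn (l.map L) hU hf).contDiffAt (hU.mem_nhds hx)).differentiableAt
        (by simp)
    have hL : HasFDerivAt (fun x => c + L x) L x := L.hasFDerivAt.const_add c
    rw [(hd.hasFDerivAt.comp x hL).fderiv]
    rfl

/-- multiplication by a factor constant along the directions -/
theorem dirDerivList_mul_const (l : List E) {f g : E → ℂ} {U : Set E} (hU : IsOpen U)
    (hf : ContDiffOn ℝ (⊤ : ℕ∞) f U) (hg : ∀ x, DifferentiableAt ℝ g x)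
    (hg0 : ∀ v ∈ l, ∀ x, fderiv ℝ g x v = 0) :
    ∀ x ∈ U, dirDerivList l (fun x => f x * g x) x = dirDerivList l f x * g x := by
  induction l with
  | nil => intro x _; rfl
  | cons v l ih =>
    intro x hx
    simp only [dirDerivList, dirDeriv]
    have : dirDerivList l (fun x => f x * g x) =ᶠ[𝓝 x] fun x => dirDerivList l f x * g x := by
      filter_upwards [hU.mem_nhds hx] with y hy
        using ih (fun v hv => hg0 v (List.mem_cons_of_mem _ hv)) y hy
    rw [this.fderiv_eq]
    have hd : DifferentiableAt ℝ (dirDerivList l f) x :=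
      ((dirDerivList_contDiffOn l hU hf).contDiffAt (hU.mem_nhds hx)).differentiableAt
        (by simp)
    rw [fderiv_fun_mul hd (hg x)]
    simp [hg0 v (by simp) x, mul_comm]

theorem dirDerivList_replicate_comm (n : ℕ) (v : E) (f : E → F) :
    dirDerivList (List.replicate (n+1) v) f = dirDerivList (List.replicate n v) (dirDeriv v f) := by
  rw [List.replicate_succ', dirDerivList_append]; rfl

theorem dirDerivList_add (l : List E) {f g : E → F} {U : Set E} (hU : IsOpen U)
    (hf : ContDiffOn ℝ (⊤ : ℕ∞) f U) (hg : ContDiffOn ℝ (⊤ : ℕ∞) g U) :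
    ∀ x ∈ U, dirDerivList l (fun x => f x + g x) x = dirDerivList l f x + dirDerivList l g x := by
  induction l with
  | nil => intro x _; rfl
  | cons v l ih =>
    intro x hx
    simp only [dirDerivList, dirDeriv]
    have : dirDerivList l (fun x => f x + g x) =ᶠ[𝓝 x]
        fun x => dirDerivList l f x + dirDerivList l g x := by
      filter_upwards [hU.mem_nhds hx] with y hy using ih y hy
    rw [this.fderiv_eq]
    have hd : ∀ {h : E → F}, ContDiffOn ℝ (⊤ : ℕ∞) h U →
        DifferentiableAt ℝ (dirDerivList l h) x := fun hh =>
      ((dirDerivList_contDiffOn l hU hh).contDiffAt (hU.mem_nhds hx)).differentiableAt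
        (by simp)
    rw [fderiv_fun_add (hd hf) (hd hg)]
    simp

/-- crude Leibniz bound -/
theorem leibniz_bound (n : ℕ) (v : E) {U : Set E} (hU : IsOpen U) (A : ℝ) (B : ℝ) (hA : 0 ≤ A)
    (x : E) (hx : x ∈ U) :
    ∀ {f g : E → ℂ}, ContDiffOn ℝ (⊤ : ℕ∞) f U → ContDiffOn ℝ (⊤ : ℕ∞) g U →
    (∀ i ≤ n, ‖dirDerivList (List.replicate i v) f x‖ ≤ A) →
    (∀ i ≤ n, ‖dirDerivList (List.replicate i v) g x‖ ≤ B) →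
    ‖dirDerivList (List.replicate n v) (fun x => f x * g x) x‖ ≤ 2 ^ n * (A * B) := by
  induction n with
  | zero =>
    intro f g hf hg hfA hgB
    have h1 := hfA 0 le_rfl
    have h2 := hgB 0 le_rfl
    simp only [List.replicate_zero, dirDerivList] at *
    rw [norm_mul]; simp only [pow_zero, one_mul]
    exact mul_le_mul h1 h2 (norm_nonneg _) hA
  | succ n ih =>
    intro f g hf hg hfA hgB
    rw [dirDerivList_replicate_comm]
    have hd : ∀ {h : E → ℂ}, ContDiffOn ℝ (⊤ : ℕ∞) h U → ∀ y ∈ U, DifferentiableAt ℝ h y :=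
      fun hh y hy => (hh.contDiffAt (hU.mem_nhds hy)).differentiableAt (by simp)
    have e1 : ∀ y ∈ U, dirDeriv v (fun x => f x * g x) y
        = f y * dirDeriv v g y + dirDeriv v f y * g y := by
      intro y hy
      simp only [dirDeriv]
      rw [fderiv_fun_mul (hd hf y hy) (hd hg y hy)]
      simp [mul_comm]
    have hDf := dirDeriv_contDiffOn v hU hf
    have hDg := dirDeriv_contDiffOn v hU hg
    rw [dirDerivList_congr _ hU e1 x hx, dirDerivList_add _ hU (hf.mul hDg) (hDf.mul hg) x hx]
    have b1 := ih hf hDg (fun i hi => hfA i (by omega))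
      (fun i hi => by rw [← dirDerivList_replicate_comm]; exact hgB (i+1) (by omega))
    have b2 := ih hDf hg
      (fun i hi => by rw [← dirDerivList_replicate_comm]; exact hfA (i+1) (by omega))
      (fun i hi => hgB i (by omega))
    refine (norm_add_le _ _).trans ?_
    rw [pow_succ]; linarith

end general

section param
variable {X : Type*} [NormedAddCommGroup X] [NormedSpace ℝ X] [FiniteDimensional ℝ X]

theorem param_integral_contDiffOn {g : X × ℝ → ℂ} {U : Set X} (hU : IsOpen U)
    (hg : ContDiffOn ℝ (⊤ : ℕ∞) g (U ×ˢ Set.univ))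
    (hloc : ∀ x ∈ U, ∃ s ∈ 𝓝 x, ∃ R : ℝ, ∀ x' ∈ s, ∀ t : ℝ, R < |t| → g (x', t) = 0) :
    ContDiffOn ℝ (⊤ : ℕ∞) (fun x => ∫ t, g (x, t)) U := by
  intro x hx
  obtain ⟨s, hs, R, hR⟩ := hloc x hx
  obtain ⟨s', hs's, hs'o, hxs'⟩ := mem_nhds_iff.1 hs
  have h := contDiffOn_convolution_right_with_param (𝕜 := ℝ) (μ := (volume : Measure ℝ))
    (f := fun _ : ℝ => (1 : ℂ)) (n := (⊤ : ℕ∞)) (ContinuousLinearMap.mul ℝ ℂ)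
    (g := fun x t => g (x, t)) (s := U ∩ s') (k := Set.Icc (-R) R) (hU.inter hs'o)
    isCompact_Icc (by
      intro p t hp ht
      apply hR p (hs's hp.2)
      by_contra hh
      exact ht (Set.mem_Icc.2 (abs_le.1 (not_lt.1 hh))))
    (locallyIntegrable_const _)
    (hg.mono (Set.prod_mono Set.inter_subset_left subset_rfl))
  have h2 : ContDiffAt ℝ (⊤ : ℕ∞) (fun x : X => (x, (0:ℝ))) x := by fun_prop
  have h3 := (h.contDiffAt (x := (x, (0:ℝ)))
    (((hU.inter hs'o).prod isOpen_univ).mem_nhds ⟨⟨hx, hxs'⟩, trivial⟩)).comp x h2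
  refine (h3.congr_of_eventuallyEq ?_).contDiffWithinAt
  filter_upwards with y
  simp only [Function.comp, convolution, ContinuousLinearMap.mul_apply', one_mul, zero_sub]
  rw [integral_neg_eq_self (fun t => g (y, t))]

theorem param_integral_fderiv {g : X × ℝ → ℂ} {U : Set X} (hU : IsOpen U)
    (hg : ContDiffOn ℝ (⊤ : ℕ∞) g (U ×ˢ Set.univ))
    (hloc : ∀ x ∈ U, ∃ s ∈ 𝓝 x, ∃ R : ℝ, ∀ x' ∈ s, ∀ t : ℝ, R < |t| → g (x', t) = 0)
    (v : X) : ∀ x ∈ U, dirDeriv v (fun x => ∫ t, g (x, t)) x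
      = ∫ t, dirDeriv ((v, 0) : X × ℝ) g (x, t) := by
  intro x hx
  obtain ⟨s, hs, R, hR⟩ := hloc x hx
  have hUo : IsOpen (U ×ˢ (Set.univ : Set ℝ)) := hU.prod isOpen_univ
  have hgd : ∀ y ∈ U, ∀ t, HasFDerivAt g (fderiv ℝ g (y, t)) (y, t) := fun y hy t =>
    ((hg.contDiffAt (hUo.mem_nhds ⟨hy, trivial⟩)).differentiableAt (by simp)).hasFDerivAt
  have hg' : ContinuousOn (fderiv ℝ g) (U ×ˢ (Set.univ : Set ℝ)) :=
    hg.continuousOn_fderiv_of_isOpen hUo (by simp)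
  obtain ⟨r, hr, hrs⟩ := Metric.nhds_basis_closedBall.mem_iff.1
    (Filter.inter_mem hs (hU.mem_nhds hx))
  have hzero : ∀ y ∈ Metric.ball x r, ∀ t : ℝ, R < |t| → fderiv ℝ g (y, t) = 0 := by
    intro y hy t ht
    have : g =ᶠ[𝓝 (y, t)] fun _ => 0 := by
      have ho : IsOpen (Metric.ball x r ×ˢ {t : ℝ | R < |t|}) :=
        Metric.isOpen_ball.prod (isOpen_lt continuous_const continuous_abs)
      filter_upwards [ho.mem_nhds ⟨hy, ht⟩] with z hz
      exact hR z.1 (hrs (Metric.ball_subset_closedBall hz.1)).1 z.2 hz.2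
    rw [this.fderiv_eq]; simp
  have hK : IsCompact (Metric.closedBall x r ×ˢ Set.Icc (-R) R) := by
    have : ProperSpace X := FiniteDimensional.proper_real X
    exact (isCompact_closedBall x r).prod isCompact_Icc
  obtain ⟨C, hC⟩ := hK.exists_bound_of_continuousOn
    (hg'.mono (fun z hz => ⟨(hrs hz.1).2, trivial⟩))
  have hcont : ∀ y ∈ U, Continuous fun t : ℝ => g (y, t) := fun y hy =>
    continuous_iff_continuousAt.2 fun t =>
      (hgd y hy t).continuousAt.comp (f := fun t : ℝ => (y, t)) (by fun_prop)
  have hcs : HasCompactSupport fun t => g (x, t) := by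
    refine HasCompactSupport.intro (isCompact_Icc (a := -R) (b := R)) fun t ht => ?_
    apply hR x (mem_of_mem_nhds hs)
    by_contra hh
    exact ht (Set.mem_Icc.2 (abs_le.1 (not_lt.1 hh)))
  have hcont' : Continuous fun t : ℝ => fderiv ℝ g (x, t) := by
    refine continuous_iff_continuousAt.2 fun t => ?_
    exact (hg'.continuousAt (hUo.mem_nhds ⟨hx, trivial⟩)).comp (f := fun t : ℝ => (x, t))
      (by fun_prop)
  have key := hasFDerivAt_integral_of_dominated_of_fderiv_le (𝕜 := ℝ)
    (μ := (volume : Measure ℝ)) (F := fun x t => g (x, t))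
    (F' := fun x t => (fderiv ℝ g (x, t)).comp (ContinuousLinearMap.inl ℝ X ℝ))
    (bound := Set.indicator (Set.Icc (-R) R)
      (fun _ => C * ‖ContinuousLinearMap.inl ℝ X ℝ‖)) (x₀ := x)
    (Metric.ball_mem_nhds x hr) ?_ ((hcont x hx).integrable_of_hasCompactSupport hcs)
    ?_ ?_ ?_ ?_
  · simp only [dirDeriv]
    rw [key.fderiv, ContinuousLinearMap.integral_apply]
    · simp
    · refine Continuous.integrable_of_hasCompactSupport (by fun_prop) ?_
      refine HasCompactSupport.intro (isCompact_Icc (a := -R) (b := R)) fun t ht => ?_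
      rw [hzero x (Metric.mem_ball_self hr) t]
      · simp
      · by_contra hh
        exact ht (Set.mem_Icc.2 (abs_le.1 (not_lt.1 hh)))
  · filter_upwards [hU.mem_nhds hx] with y hy using (hcont y hy).aestronglyMeasurable
  · exact Continuous.aestronglyMeasurable (by fun_prop)
  · refine Eventually.of_forall fun t y hy => ?_
    by_cases ht : t ∈ Set.Icc (-R) R
    · rw [Set.indicator_of_mem ht]
      refine (ContinuousLinearMap.opNorm_comp_le _ _).trans ?_
      gcongr
      exact hC (y, t) ⟨Metric.ball_subset_closedBall hy, ht⟩
    · rw [Set.indicator_of_notMem ht, hzero y hy t]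
      · simp
      · by_contra hh
        exact ht (Set.mem_Icc.2 (abs_le.1 (not_lt.1 hh)))
  · exact (integrable_indicator_iff measurableSet_Icc).2 continuous_const.integrableOn_Icc
  · refine Eventually.of_forall fun t y hy => ?_
    exact (hgd y (hrs (Metric.ball_subset_closedBall hy)).2 t).comp y
      (hasFDerivAt_prodMk_left y t)

theorem param_integral_dirDerivList {U : Set X} (hU : IsOpen U) (l : List X) {g : X × ℝ → ℂ}
    (hg : ContDiffOn ℝ (⊤ : ℕ∞) g (U ×ˢ Set.univ))
    (hloc : ∀ x ∈ U, ∃ s ∈ 𝓝 x, ∃ R : ℝ, ∀ x' ∈ s, ∀ t : ℝ, R < |t| → g (x', t) = 0) :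
    ∀ x ∈ U, dirDerivList l (fun x => ∫ t, g (x, t)) x
      = ∫ t, dirDerivList (l.map fun v => ((v, 0) : X × ℝ)) g (x, t) := by
  have hUo : IsOpen (U ×ˢ (Set.univ : Set ℝ)) := hU.prod isOpen_univ
  induction l with
  | nil => intro x _; rfl
  | cons v l ih =>
    intro x hx
    simp only [dirDerivList, List.map_cons]
    have h1 := dirDerivList_congr [v] hU ih x hx
    simp only [dirDerivList] at h1
    rw [h1]
    refine param_integral_fderiv hU (dirDerivList_contDiffOn _ hUo hg) ?_ v x hx
    intro y hy
    obtain ⟨s, hs, R, hR⟩ := hloc y hy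
    obtain ⟨s', hs's, hs'o, hxs'⟩ := mem_nhds_iff.1 hs
    refine ⟨s', hs'o.mem_nhds hxs', R, fun x' hx' t ht => ?_⟩
    exact dirDerivList_eq_zero _ (U := s' ×ˢ {t : ℝ | R < |t|})
      (hs'o.prod (isOpen_lt continuous_const continuous_abs))
      (fun z hz => hR z.1 (hs's hz.1) z.2 hz.2) (x', t) ⟨hx', ht⟩

end param

open MeasureTheory Filter Topology

section nested
variable {A B C F : Type*} [NormedAddCommGroup A] [NormedSpace ℝ A]
  [NormedAddCommGroup B] [NormedSpace ℝ B]
  [NormedAddCommGroup C] [NormedSpace ℝ C]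
  [NormedAddCommGroup F] [NormedSpace ℝ F]

/-- joint list of directions -/
def jointList (la : List A) (lb : List B) (lc : List C) : List ((A × B) × C) :=
  la.map (fun v => ((v, 0), 0)) ++ (lb.map (fun v => ((0, v), 0)) ++ lc.map (fun v => (0, v)))

theorem nested_eq_joint (la : List A) (lb : List B) (lc : List C) {G : (A × B) × C → F}
    {U : Set A} {V : Set B} (hU : IsOpen U) (hV : IsOpen V)
    (hG : ContDiffOn ℝ (⊤ : ℕ∞) G ((U ×ˢ V) ×ˢ Set.univ)) (η : C) :
    ∀ y ∈ U, ∀ y' ∈ V,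
    dirDerivList la (fun w => dirDerivList lb
      (fun w' => dirDerivList lc (fun e => G ((w, w'), e)) η) y') y
      = dirDerivList (jointList la lb lc) G ((y, y'), η) := by
  have hO : IsOpen ((U ×ˢ V) ×ˢ (Set.univ : Set C)) := (hU.prod hV).prod isOpen_univ
  have s1 : ∀ w ∈ U, ∀ w' ∈ V, dirDerivList lc (fun e => G ((w, w'), e)) η
      = dirDerivList (lc.map (fun v => (0, v))) G ((w, w'), η) := by
    intro w hw w' hw'
    have := dirDerivList_comp (ContinuousLinearMap.inr ℝ (A × B) C) ((w, w'), (0 : C)) lc hO hG η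
      (by simp [hw, hw'])
    simp at this
    exact this
  have hG1 := dirDerivList_contDiffOn (lc.map (fun v => ((0 : A × B), v))) hO hG
  have s2 : ∀ w ∈ U, ∀ w' ∈ V,
      dirDerivList lb (fun w' => dirDerivList lc (fun e => G ((w, w'), e)) η) w'
      = dirDerivList (lb.map (fun v => ((0, v), 0)))
          (dirDerivList (lc.map (fun v => (0, v))) G) ((w, w'), η) := by
    intro w hw w' hw'
    rw [dirDerivList_congr lb hV (s1 w hw) w' hw']
    have := dirDerivList_comp ((ContinuousLinearMap.inl ℝ (A × B) C).comp
      (ContinuousLinearMap.inr ℝ A B)) ((w, 0), η) lb hO hG1 w'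
      (by simp [hw, hw'])
    simp at this
    exact this
  have hG2 := dirDerivList_contDiffOn (lb.map (fun v => (((0 : A), v), (0 : C)))) hO hG1
  intro y hy y' hy'
  rw [dirDerivList_congr la hU (fun w hw => s2 w hw y' hy') y hy]
  have := dirDerivList_comp ((ContinuousLinearMap.inl ℝ (A × B) C).comp
      (ContinuousLinearMap.inl ℝ A B)) ((0, y'), η) la hO hG2 y
      (by simp [hy, hy'])
  rw [jointList, dirDerivList_append, dirDerivList_append]
  simp at this
  exact this

end nested

/-- list of directions of a multi-index -/
def mlist {n : ℕ} {E : Type*} (b : Fin n → E) (α : Fin n → ℕ) : List E :=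
  (List.finRange n).flatMap fun i => List.replicate (α i) (b i)

theorem mlist_snoc {k : ℕ} (α : Fin k → ℕ) :
    mlist (basisP k) (Fin.snoc (α := fun _ => ℕ) α 0)
      = (mlist (fun i => (Pi.single i 1 : Fin k → ℝ)) α).map (fun v => (v, (0 : ℝ))) := by
  unfold mlist
  rw [List.finRange_succ_last, List.flatMap_append, List.map_flatMap, List.flatMap_map]
  simp [basisP, Fin.snoc_castSucc (α := fun _ => ℕ), Fin.snoc_last (α := fun _ => ℕ)]

theorem mOrder_snoc {k : ℕ} (α : Fin k → ℕ) :
    mOrder (Fin.snoc (α := fun _ => ℕ) α 0 : Fin (k+1) → ℕ) = mOrder α := by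
  unfold mOrder
  rw [Fin.sum_univ_castSucc]
  simp [Fin.snoc_castSucc (α := fun _ => ℕ), Fin.snoc_last (α := fun _ => ℕ)]

theorem mlist_zero {n : ℕ} {E : Type*} (b : Fin n → E) : mlist b (fun _ => 0) = [] := by
  simp [mlist]

theorem mOrder_zero {n : ℕ} : mOrder (fun _ : Fin n => 0) = 0 := by
  simp [mOrder]

theorem mlist_single {n : ℕ} {E : Type*} (b : Fin n → E) (j : Fin n) (N : ℕ) :
    mlist b (Pi.single j N) = List.replicate N (b j) := by
  have key : ∀ l : List (Fin n), l.Nodup →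
      (l.flatMap fun i => List.replicate ((Pi.single j N : Fin n → ℕ) i) (b i))
        = if j ∈ l then List.replicate N (b j) else [] := by
    intro l
    induction l with
    | nil => simp
    | cons i l ih =>
      intro h
      rw [List.nodup_cons] at h
      rw [List.flatMap_cons, ih h.2]
      by_cases hij : j = i
      · subst hij; simp [h.1]
      · simp [hij]
  unfold mlist
  rw [key _ (List.nodup_finRange n)]
  simp

theorem mOrder_single {n : ℕ} (j : Fin n) (N : ℕ) :
    mOrder (Pi.single j N) = N := by
  simp [mOrder]



theorem eNormP_nonneg {k : ℕ} (η : (Fin k → ℝ) × ℝ) : 0 ≤ eNormP η := Real.sqrt_nonneg _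

theorem norm_le_eNormP {k : ℕ} (η : (Fin k → ℝ) × ℝ) : ‖η‖ ≤ eNormP η := by
  unfold eNormP
  have hs : 0 ≤ ∑ i, η.1 i ^ 2 := Finset.sum_nonneg fun i _ => sq_nonneg _
  rw [Prod.norm_def]
  apply max_le
  · rw [pi_norm_le_iff_of_nonneg (Real.sqrt_nonneg _)]
    intro i
    rw [Real.norm_eq_abs]
    apply Real.abs_le_sqrt
    have := Finset.single_le_sum (f := fun i => η.1 i ^ 2) (fun i _ => sq_nonneg _)
      (Finset.mem_univ i)
    nlinarith [sq_nonneg η.2]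
  · rw [Real.norm_eq_abs]
    apply Real.abs_le_sqrt
    linarith

theorem sqrt_sum_le {k : ℕ} (x : Fin k → ℝ) :
    Real.sqrt (∑ i, x i ^ 2) ≤ (k : ℝ) * ‖x‖ := by
  have h1 : ∑ i, x i ^ 2 ≤ ((k : ℝ) * ‖x‖) ^ 2 := by
    have h2 : ∑ i, x i ^ 2 ≤ ∑ _i : Fin k, ‖x‖ ^ 2 := by
      refine Finset.sum_le_sum fun i _ => ?_
      rw [← sq_abs]
      have := norm_le_pi_norm x i
      rw [Real.norm_eq_abs] at this
      gcongr
    refine h2.trans ?_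
    simp only [Finset.sum_const, Finset.card_univ, Fintype.card_fin, nsmul_eq_mul]
    rw [mul_pow]
    have : (k : ℝ) ≤ (k : ℝ) ^ 2 := by
      exact_mod_cast Nat.le_self_pow (by norm_num) k
    gcongr
  exact Real.sqrt_le_iff.2 ⟨by positivity, h1⟩

theorem eNormP_le {k : ℕ} (η : (Fin k → ℝ) × ℝ) :
    eNormP η ≤ Real.sqrt (∑ i, η.1 i ^ 2) + |η.2| := by
  unfold eNormP
  have hs : 0 ≤ ∑ i, η.1 i ^ 2 := Finset.sum_nonneg fun i _ => sq_nonneg _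
  refine Real.sqrt_le_iff.2 ⟨by positivity, ?_⟩
  have h1 := Real.sq_sqrt hs
  have h2 := sq_abs η.2
  have h3 : 0 ≤ Real.sqrt (∑ i, η.1 i ^ 2) * |η.2| := by positivity
  nlinarith

theorem eNormP_le_of_cone {k : ℕ} {c : ℝ} (hc : 0 ≤ c) (η : (Fin k → ℝ) × ℝ)
    (h : |η.2| ≤ c * Real.sqrt (∑ i, η.1 i ^ 2)) :
    1 + eNormP η ≤ (1 + (1 + c) * k) * (1 + ‖η.1‖) := by
  have h1 := eNormP_le η
  have h2 := sqrt_sum_le η.1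
  have h3 : eNormP η ≤ (1 + c) * ((k : ℝ) * ‖η.1‖) := by
    calc eNormP η ≤ (1 + c) * Real.sqrt (∑ i, η.1 i ^ 2) := by linarith
      _ ≤ _ := by gcongr
  have h4 : 0 ≤ (1 + c) * (k : ℝ) := by positivity
  nlinarith [norm_nonneg η.1]

/-- part (i) -/
theorem cone_vanish {k : ℕ} (ε : ℝ) (hε : 0 < ε)
    (ta : ((Fin k → ℝ) × ℝ) → ((Fin k → ℝ) × ℝ) → ((Fin k → ℝ) × ℝ) → ℂ)
    (hvanish : ∀ y y' : (Fin k → ℝ) × ℝ, ∀ η : (Fin k → ℝ) × ℝ,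
      (1 - ε) * eNormP η ≤ |η.2| → ta y y' η = 0) :
    ∃ c : ℝ, 0 < c ∧ ∀ y y' : (Fin k → ℝ) × ℝ, ∀ η₀ : Fin k → ℝ, ∀ ηd : ℝ,
      c * Real.sqrt (∑ i, η₀ i ^ 2) ≤ |ηd| → ta y y' (η₀, ηd) = 0 := by
  rcases le_or_gt 1 ε with h1 | h1
  · refine ⟨1, one_pos, fun y y' η₀ ηd _ => hvanish _ _ _ ?_⟩
    have := eNormP_nonneg (η₀, ηd)
    have h2 := abs_nonneg ηd
    simp only
    nlinarith
  · have hθ : 0 < 1 - (1 - ε) ^ 2 := by nlinarith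
    have hθ' := Real.sqrt_pos.2 hθ
    refine ⟨(1 - ε) / Real.sqrt (1 - (1 - ε) ^ 2), div_pos (by linarith) hθ',
      fun y y' η₀ ηd h => hvanish _ _ _ ?_⟩
    have hs : 0 ≤ ∑ i, η₀ i ^ 2 := Finset.sum_nonneg fun i _ => sq_nonneg _
    have hR := Real.sqrt_nonneg (∑ i, η₀ i ^ 2)
    rw [div_mul_eq_mul_div, div_le_iff₀ hθ'] at h
    have h2 : ((1 - ε) * Real.sqrt (∑ i, η₀ i ^ 2)) ^ 2
        ≤ (|ηd| * Real.sqrt (1 - (1 - ε) ^ 2)) ^ 2 :=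
      pow_le_pow_left₀ (mul_nonneg (by linarith) hR) h 2
    rw [mul_pow, mul_pow, Real.sq_sqrt hs, Real.sq_sqrt hθ.le, sq_abs] at h2
    simp only
    rw [← Real.sqrt_sq_eq_abs]
    apply Real.le_sqrt_of_sq_le
    unfold eNormP
    rw [mul_pow, Real.sq_sqrt (by positivity)]
    simp only
    nlinarith

theorem rpow_cmp {M x y : ℝ} (hM : 1 ≤ M) (hy : 1 ≤ y) (h1 : y ≤ x) (h2 : x ≤ M * y) (s : ℝ) :
    x ^ s ≤ M ^ |s| * y ^ s := by
  have hy0 : 0 < y := by linarith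
  have hM0 : 0 < M := by linarith
  rcases le_total 0 s with hs | hs
  · rw [abs_of_nonneg hs, ← Real.mul_rpow hM0.le hy0.le]
    exact Real.rpow_le_rpow (by linarith) h2 hs
  · have : x ^ s ≤ y ^ s := Real.rpow_le_rpow_of_nonpos hy0 h1 hs
    have h3 : 1 ≤ M ^ |s| := Real.one_le_rpow hM (abs_nonneg s)
    have h4 : 0 ≤ y ^ s := Real.rpow_nonneg hy0.le s
    nlinarith

open MeasureTheory Filter Topology

/-- The rearrangement map. -/
noncomputable def phiMap (k : ℕ) :
    ((((Fin k → ℝ) × (Fin k → ℝ)) × (Fin k → ℝ)) × (ℝ × ℝ)) × ℝ →L[ℝ]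
      (((Fin k → ℝ) × ℝ) × ((Fin k → ℝ) × ℝ)) × ((Fin k → ℝ) × ℝ) where
  toFun z := (((z.1.1.1.1, z.1.2.1), (z.1.1.1.2, z.1.2.2)), (z.1.1.2, z.2))
  map_add' _ _ := rfl
  map_smul' _ _ := rfl
  cont := by fun_prop

/-- The exponential factor. -/
noncomputable def expFac (k : ℕ)
    (z : ((((Fin k → ℝ) × (Fin k → ℝ)) × (Fin k → ℝ)) × (ℝ × ℝ)) × ℝ) : ℂ :=
  (((2 * Real.pi)⁻¹ : ℝ) : ℂ) *
    Complex.exp (Complex.I * (((z.1.2.1 - z.1.2.2) * z.2 : ℝ) : ℂ))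

theorem expFac_contDiff (k : ℕ) : ContDiff ℝ (⊤ : ℕ∞) (expFac k) := by
  unfold expFac
  have h : ContDiff ℝ (⊤ : ℕ∞)
    (fun z : ((((Fin k → ℝ) × (Fin k → ℝ)) × (Fin k → ℝ)) × (ℝ × ℝ)) × ℝ =>
      (((z.1.2.1 - z.1.2.2) * z.2 : ℝ) : ℂ)) :=
    Complex.ofRealCLM.contDiff.comp (f := fun z : ((((Fin k → ℝ) × (Fin k → ℝ)) ×
      (Fin k → ℝ)) × (ℝ × ℝ)) × ℝ => (z.1.2.1 - z.1.2.2) * z.2) (by fun_prop)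
  exact contDiff_const.mul (contDiff_const.mul h).cexp

theorem expFac_fderiv (k : ℕ) (v : ((Fin k → ℝ) × (Fin k → ℝ)) × (Fin k → ℝ))
    (z : ((((Fin k → ℝ) × (Fin k → ℝ)) × (Fin k → ℝ)) × (ℝ × ℝ)) × ℝ) :
    fderiv ℝ (expFac k) z ((v, 0), 0) = 0 := by
  have hd : DifferentiableAt ℝ (expFac k) z :=
    (expFac_contDiff k).contDiffAt.differentiableAt (by simp)
  rw [← hd.lineDeriv_eq_fderiv]
  unfold lineDeriv
  have : (fun t : ℝ => expFac k (z + t • ((v, 0), 0))) = fun _ => expFac k z := by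
    funext t
    simp [expFac]
  rw [this]; simp

theorem expFac_norm (k : ℕ)
    (z : ((((Fin k → ℝ) × (Fin k → ℝ)) × (Fin k → ℝ)) × (ℝ × ℝ)) × ℝ) :
    ‖expFac k z‖ ≤ 1 := by
  unfold expFac
  rw [norm_mul, mul_comm Complex.I, Complex.norm_exp_ofReal_mul_I, mul_one, Complex.norm_real,
    Real.norm_eq_abs, abs_of_pos (by positivity)]
  apply inv_le_one_of_one_le₀
  linarith [Real.pi_gt_three]

section main
variable {k : ℕ} {Sig : Set (Fin k → ℝ)} {Λ : Set ℝ}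
  {ta : ((Fin k → ℝ) × ℝ) → ((Fin k → ℝ) × ℝ) → ((Fin k → ℝ) × ℝ) → ℂ}
  {ana : (Fin k → ℝ) → (Fin k → ℝ) → (Fin k → ℝ) → ℝ → ℝ → ℂ}

/-- uncurried amplitude -/
def TAf (ta : ((Fin k → ℝ) × ℝ) → ((Fin k → ℝ) × ℝ) → ((Fin k → ℝ) × ℝ) → ℂ) :
    (((Fin k → ℝ) × ℝ) × ((Fin k → ℝ) × ℝ)) × ((Fin k → ℝ) × ℝ) → ℂ :=
  fun q => ta q.1.1 q.1.2 q.2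

/-- uncurried fibre amplitude -/
def ANAf (ana : (Fin k → ℝ) → (Fin k → ℝ) → (Fin k → ℝ) → ℝ → ℝ → ℂ) :
    (((Fin k → ℝ) × (Fin k → ℝ)) × (Fin k → ℝ)) × (ℝ × ℝ) → ℂ :=
  fun x => ana x.1.1.1 x.1.1.2 x.1.2 x.2.1 x.2.2

/-- domain of the fibre amplitude -/
def U5 (Sig : Set (Fin k → ℝ)) (Λ : Set ℝ) :
    Set ((((Fin k → ℝ) × (Fin k → ℝ)) × (Fin k → ℝ)) × (ℝ × ℝ)) :=
  ((Sig ×ˢ Sig) ×ˢ Set.univ) ×ˢ (Λ ×ˢ Λ)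

theorem U5_open (hSig : IsOpen Sig) (hΛ : IsOpen Λ) : IsOpen (U5 Sig Λ) :=
  ((hSig.prod hSig).prod isOpen_univ).prod (hΛ.prod hΛ)

/-- integrand -/
noncomputable def gInt (ta : ((Fin k → ℝ) × ℝ) → ((Fin k → ℝ) × ℝ) → ((Fin k → ℝ) × ℝ) → ℂ)
    (z : ((((Fin k → ℝ) × (Fin k → ℝ)) × (Fin k → ℝ)) × (ℝ × ℝ)) × ℝ) : ℂ :=
  TAf ta (phiMap k z) * expFac k z

theorem TAphi_contDiffOn (hT : ContDiffOn ℝ (⊤ : ℕ∞) (TAf ta)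
    (((Sig ×ˢ Λ) ×ˢ (Sig ×ˢ Λ)) ×ˢ Set.univ)) :
    ContDiffOn ℝ (⊤ : ℕ∞) (fun z => TAf ta (phiMap k z)) (U5 Sig Λ ×ˢ Set.univ) :=
  hT.comp (phiMap k).contDiff.contDiffOn
    (fun z hz => ⟨⟨⟨hz.1.1.1.1, hz.1.2.1⟩, ⟨hz.1.1.1.2, hz.1.2.2⟩⟩, trivial⟩)

theorem gInt_contDiffOn (hT : ContDiffOn ℝ (⊤ : ℕ∞) (TAf ta)
    (((Sig ×ˢ Λ) ×ˢ (Sig ×ˢ Λ)) ×ˢ Set.univ)) :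
    ContDiffOn ℝ (⊤ : ℕ∞) (gInt ta) (U5 Sig Λ ×ˢ Set.univ) :=
  (TAphi_contDiffOn hT).mul (expFac_contDiff k).contDiffOn

theorem gInt_loc {c : ℝ} (hc : 0 < c)
    (hv : ∀ y y' : (Fin k → ℝ) × ℝ, ∀ η₀ : Fin k → ℝ, ∀ ηd : ℝ,
      c * Real.sqrt (∑ i, η₀ i ^ 2) ≤ |ηd| → ta y y' (η₀, ηd) = 0) :
    ∀ x ∈ U5 Sig Λ, ∃ s ∈ 𝓝 x, ∃ R : ℝ, ∀ x' ∈ s, ∀ t : ℝ, R < |t| → gInt ta (x', t) = 0 := by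
  intro x _
  refine ⟨{x' | c * Real.sqrt (∑ i, x'.1.2 i ^ 2) < c * Real.sqrt (∑ i, x.1.2 i ^ 2) + 1},
    (isOpen_lt (by fun_prop) continuous_const).mem_nhds (by simp),
    c * Real.sqrt (∑ i, x.1.2 i ^ 2) + 1, ?_⟩
  intro x' hx' t ht
  have : TAf ta (phiMap k (x', t)) = 0 := hv _ _ _ _ (hx'.le.trans ht.le)
  rw [gInt, this, zero_mul]

theorem ANAf_eq (hana : ∀ (y₀ y₀' η₀ : Fin k → ℝ) (μ ν : ℝ),
      ana y₀ y₀' η₀ μ ν = (((2 * Real.pi)⁻¹ : ℝ) : ℂ) *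
        ∫ ηd : ℝ, ta (y₀, μ) (y₀', ν) (η₀, ηd) *
          Complex.exp (Complex.I * (((μ - ν) * ηd : ℝ) : ℂ))) :
    ANAf ana = fun x => ∫ t, gInt ta (x, t) := by
  funext x
  rw [ANAf, hana, ← integral_const_mul]
  congr 1
  funext t
  simp only [gInt, expFac, TAf, phiMap, ContinuousLinearMap.coe_mk', LinearMap.coe_mk,
    AddHom.coe_mk]
  ring

theorem ANAf_contDiffOn (hSig : IsOpen Sig) (hΛ : IsOpen Λ) (hT : ContDiffOn ℝ (⊤ : ℕ∞) (TAf ta)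
    (((Sig ×ˢ Λ) ×ˢ (Sig ×ˢ Λ)) ×ˢ Set.univ)) {c : ℝ} (hc : 0 < c)
    (hv : ∀ y y' : (Fin k → ℝ) × ℝ, ∀ η₀ : Fin k → ℝ, ∀ ηd : ℝ,
      c * Real.sqrt (∑ i, η₀ i ^ 2) ≤ |ηd| → ta y y' (η₀, ηd) = 0)
    (hA : ANAf ana = fun x => ∫ t, gInt ta (x, t)) :
    ContDiffOn ℝ (⊤ : ℕ∞) (ANAf ana) (U5 Sig Λ) := by
  rw [hA]
  exact param_integral_contDiffOn (U5_open hSig hΛ) (gInt_contDiffOn hT) (gInt_loc hc hv)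

/-- multi-index list in `ℝ^k`. -/
noncomputable def sl (α : Fin k → ℕ) : List (Fin k → ℝ) :=
  mlist (fun i => (Pi.single i 1 : Fin k → ℝ)) α

theorem fibre_contDiffOn
    (hA : ContDiffOn ℝ (⊤ : ℕ∞) (ANAf ana) (U5 Sig Λ)) {μ ν : ℝ} (hμ : μ ∈ Λ) (hν : ν ∈ Λ) :
    ContDiffOn ℝ (⊤ : ℕ∞)
      (fun q : ((Fin k → ℝ) × (Fin k → ℝ)) × (Fin k → ℝ) => ana q.1.1 q.1.2 q.2 μ ν)
      ((Sig ×ˢ Sig) ×ˢ Set.univ) :=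
  hA.comp (f := fun q : ((Fin k → ℝ) × (Fin k → ℝ)) × (Fin k → ℝ) => (q, (μ, ν)))
    (by fun_prop) (fun _ hq => ⟨hq, hμ, hν⟩)

theorem nested_ana (hSig : IsOpen Sig) (hΛ : IsOpen Λ)
    (hA : ContDiffOn ℝ (⊤ : ℕ∞) (ANAf ana) (U5 Sig Λ)) (α β β' : Fin k → ℕ) :
    ∀ μ ∈ Λ, ∀ ν ∈ Λ, ∀ y₀ ∈ Sig, ∀ y₀' ∈ Sig, ∀ η₀ : Fin k → ℝ,
      mpderiv β (fun w => mpderiv β'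
              (fun w' => mpderiv α (fun e => ana w w' e μ ν) η₀) y₀') y₀ =
      dirDerivList ((jointList (sl β) (sl β') (sl α)).map fun v => (v, ((0 : ℝ), (0 : ℝ))))
        (ANAf ana) (((y₀, y₀'), η₀), (μ, ν)) := by
  intro μ hμ ν hν y₀ hy y₀' hy' η₀
  have h1 := nested_eq_joint (sl β) (sl β') (sl α) hSig hSig
    (fibre_contDiffOn hA hμ hν) η₀ y₀ hy y₀' hy'
  have h2 := dirDerivList_comp (ContinuousLinearMap.inl ℝ
      (((Fin k → ℝ) × (Fin k → ℝ)) × (Fin k → ℝ)) (ℝ × ℝ)) (0, (μ, ν))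
      (jointList (sl β) (sl β') (sl α)) (U5_open hSig hΛ) hA ((y₀, y₀'), η₀)
      (by simp [U5, hy, hy', hμ, hν])
  simp at h2
  exact h1.trans h2

theorem nested_int (hSig : IsOpen Sig) (hΛ : IsOpen Λ) (hT : ContDiffOn ℝ (⊤ : ℕ∞) (TAf ta)
    (((Sig ×ˢ Λ) ×ˢ (Sig ×ˢ Λ)) ×ˢ Set.univ)) {c : ℝ} (hc : 0 < c)
    (hv : ∀ y y' : (Fin k → ℝ) × ℝ, ∀ η₀ : Fin k → ℝ, ∀ ηd : ℝ,
      c * Real.sqrt (∑ i, η₀ i ^ 2) ≤ |ηd| → ta y y' (η₀, ηd) = 0)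
    (hA : ANAf ana = fun x => ∫ t, gInt ta (x, t))
    (J : List (((Fin k → ℝ) × (Fin k → ℝ)) × (Fin k → ℝ))) :
    ∀ x ∈ U5 Sig Λ, dirDerivList (J.map fun v => (v, ((0 : ℝ), (0 : ℝ)))) (ANAf ana) x
      = ∫ t, dirDerivList (J.map fun v => phiMap k ((v, 0), 0)) (TAf ta) (phiMap k (x, t))
          * expFac k (x, t) := by
  intro x hx
  have hUo := U5_open hSig hΛ
  have hUo' : IsOpen (U5 Sig Λ ×ˢ (Set.univ : Set ℝ)) := hUo.prod isOpen_univ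
  rw [hA, param_integral_dirDerivList hUo _ (gInt_contDiffOn hT) (gInt_loc hc hv) x hx]
  congr 1
  funext t
  have h1 := dirDerivList_mul_const
    ((J.map fun v => (v, ((0 : ℝ), (0 : ℝ)))).map fun v => (v, (0 : ℝ))) hUo'
    (TAphi_contDiffOn hT) (g := expFac k)
    (fun x => (expFac_contDiff k).contDiffAt.differentiableAt (by simp))
    (by
      intro v hv x
      simp only [List.mem_map] at hv
      obtain ⟨_, ⟨a, _, rfl⟩, rfl⟩ := hv
      exact expFac_fderiv k a x) (x, t) ⟨hx, trivial⟩
  have hYo : IsOpen (((Sig ×ˢ Λ) ×ˢ (Sig ×ˢ Λ)) ×ˢ (Set.univ : Set ((Fin k → ℝ) × ℝ))) :=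
    ((hSig.prod hΛ).prod (hSig.prod hΛ)).prod isOpen_univ
  have h2 := dirDerivList_comp (phiMap k) 0
    ((J.map fun v => (v, ((0 : ℝ), (0 : ℝ)))).map fun v => (v, (0 : ℝ))) hYo hT (x, t) (by
      rw [zero_add]
      exact ⟨⟨⟨hx.1.1.1, hx.2.1⟩, ⟨hx.1.1.2, hx.2.2⟩⟩, trivial⟩)
  simp only [zero_add] at h2
  rw [List.map_map, List.map_map] at h2
  refine h1.trans ?_
  rw [List.map_map, h2]
  rfl

theorem jointList_phi (α β β' : Fin k → ℕ) :
    ((jointList (sl β) (sl β') (sl α)).map fun v => phiMap k ((v, 0), 0))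
      = jointList (mlist (basisP k) (Fin.snoc (α := fun _ => ℕ) β 0))
        (mlist (basisP k) (Fin.snoc (α := fun _ => ℕ) β' 0))
        (mlist (basisP k) (Fin.snoc (α := fun _ => ℕ) α 0)) := by
  rw [mlist_snoc, mlist_snoc, mlist_snoc]
  simp only [jointList, List.map_append, List.map_map]
  rfl

/-- bound for joint derivatives of `ta`. -/
theorem nested_ta (hSig : IsOpen Sig) (hΛ : IsOpen Λ) {m ρ δ : ℝ}
    (hta : IsAmplitudeP (Sig ×ˢ Λ) m ρ δ ta) (α β β' : Fin (k + 1) → ℕ)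
    (K : Set ((Fin k → ℝ) × ℝ)) (hK : IsCompact K) (hKY : K ⊆ Sig ×ˢ Λ) :
    ∃ C : ℝ, 0 ≤ C ∧ ∀ y ∈ K, ∀ y' ∈ K, ∀ η : (Fin k → ℝ) × ℝ,
      ‖dirDerivList (jointList (mlist (basisP k) β) (mlist (basisP k) β') (mlist (basisP k) α))
        (TAf ta) ((y, y'), η)‖ ≤
        C * (1 + eNormP η) ^ (m - ρ * (mOrder α : ℝ) + δ * ((mOrder β : ℝ) + (mOrder β' : ℝ))) := by
  obtain ⟨C, hC⟩ := hta.2 α β β' K hK hKY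
  refine ⟨max C 0, le_max_right _ _, fun y hy y' hy' η => ?_⟩
  have h := hC y hy y' hy' η
  have h1 := nested_eq_joint (mlist (basisP k) β) (mlist (basisP k) β') (mlist (basisP k) α)
    (hSig.prod hΛ) (hSig.prod hΛ) hta.1 η y (hKY hy) y' (hKY hy')
  have h2 : ‖dirDerivList (jointList (mlist (basisP k) β) (mlist (basisP k) β')
      (mlist (basisP k) α)) (TAf ta) ((y, y'), η)‖ ≤ C * (1 + eNormP η) ^
        (m - ρ * (mOrder α : ℝ) + δ * ((mOrder β : ℝ) + (mOrder β' : ℝ))) := by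
    refine le_trans (le_of_eq ?_) h
    congr 1
    exact h1.symm
  refine h2.trans ?_
  have := eNormP_nonneg η
  gcongr
  exact le_max_left _ _

theorem part_ii (hSig : IsOpen Sig) (hΛ : IsOpen Λ) {m ρ δ : ℝ}
    (hta : IsAmplitudeP (Sig ×ˢ Λ) m ρ δ ta) {c : ℝ} (hc : 0 < c)
    (hv : ∀ y y' : (Fin k → ℝ) × ℝ, ∀ η₀ : Fin k → ℝ, ∀ ηd : ℝ,
      c * Real.sqrt (∑ i, η₀ i ^ 2) ≤ |ηd| → ta y y' (η₀, ηd) = 0)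
    (hA : ANAf ana = fun x => ∫ t, gInt ta (x, t))
    (α β β' : Fin k → ℕ) (K₀ : Set (Fin k → ℝ)) (hK₀ : IsCompact K₀) (hKS : K₀ ⊆ Sig)
    (L : Set ℝ) (hL : IsCompact L) (hLΛ : L ⊆ Λ) : ∃ C : ℝ,
        ∀ μ ∈ L, ∀ ν ∈ L, ∀ y₀ ∈ K₀, ∀ y₀' ∈ K₀, ∀ η₀ : Fin k → ℝ,
          ‖mpderiv β (fun w => mpderiv β'
              (fun w' => mpderiv α (fun e => ana w w' e μ ν) η₀) y₀') y₀‖ ≤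
            C * (1 + ‖η₀‖) ^
              (m + 1 - ρ * (mOrder α : ℝ) + δ * ((mOrder β : ℝ) + (mOrder β' : ℝ))) := by
  have hAs := ANAf_contDiffOn hSig hΛ hta.1 hc hv hA
  obtain ⟨C, hC0, hC⟩ := nested_ta hSig hΛ hta (Fin.snoc (α := fun _ => ℕ) α 0)
    (Fin.snoc (α := fun _ => ℕ) β 0) (Fin.snoc (α := fun _ => ℕ) β' 0) (K₀ ×ˢ L)
    (hK₀.prod hL) (Set.prod_mono hKS hLΛ)
  rw [mOrder_snoc, mOrder_snoc, mOrder_snoc] at hC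
  set s : ℝ := m - ρ * (mOrder α : ℝ) + δ * ((mOrder β : ℝ) + (mOrder β' : ℝ)) with hs
  set M : ℝ := 1 + (1 + c) * k with hM
  have hM1 : 1 ≤ M := by rw [hM]; have : 0 ≤ (1 + c) * (k : ℝ) := by positivity
                         linarith
  refine ⟨C * M ^ |s| * (2 * (c * k)), fun μ hμ ν hν y₀ hy y₀' hy' η₀ => ?_⟩
  rw [nested_ana hSig hΛ hAs α β β' μ (hLΛ hμ) ν (hLΛ hν) y₀ (hKS hy) y₀' (hKS hy') η₀,
    nested_int hSig hΛ hta.1 hc hv hA _ _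
      ⟨⟨⟨hKS hy, hKS hy'⟩, trivial⟩, ⟨hLΛ hμ, hLΛ hν⟩⟩, jointList_phi]
  set r : ℝ := c * Real.sqrt (∑ i, η₀ i ^ 2) with hr
  have hr0 : 0 ≤ r := by positivity
  have hn1 : 0 < 1 + ‖η₀‖ := by positivity
  rw [← setIntegral_eq_integral_of_forall_compl_eq_zero (s := Set.Icc (-r) r)]
  · have hb := norm_setIntegral_le_of_norm_le_const (μ := (volume : Measure ℝ))
      (s := Set.Icc (-r) r) (C := C * (M ^ |s| * (1 + ‖η₀‖) ^ s))
      (f := fun t => dirDerivList (jointList (mlist (basisP k) (Fin.snoc (α := fun _ => ℕ) β 0))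
        (mlist (basisP k) (Fin.snoc (α := fun _ => ℕ) β' 0))
        (mlist (basisP k) (Fin.snoc (α := fun _ => ℕ) α 0))) (TAf ta)
          (phiMap k ((((y₀, y₀'), η₀), (μ, ν)), t)) * expFac k ((((y₀, y₀'), η₀), (μ, ν)), t))
      (by simp) (by
        intro t ht
        rw [norm_mul]
        have h1 := hC (y₀, μ) ⟨hy, hμ⟩ (y₀', ν) ⟨hy', hν⟩ (η₀, t)
        have h2 := expFac_norm k ((((y₀, y₀'), η₀), (μ, ν)), t)
        have h3 : (1 + eNormP (η₀, t)) ^ s ≤ M ^ |s| * (1 + ‖η₀‖) ^ s := by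
          apply rpow_cmp hM1 (by linarith [norm_nonneg η₀])
          · have := norm_le_eNormP (η₀, t)
            have h5 : ‖η₀‖ ≤ ‖(η₀, t)‖ := norm_fst_le (η₀, t)
            linarith
          · exact eNormP_le_of_cone hc.le (η₀, t) (abs_le.2 ht)
        calc _ ≤ ‖_‖ * 1 := mul_le_mul_of_nonneg_left h2 (norm_nonneg _)
          _ = ‖_‖ := mul_one _
          _ ≤ _ := h1
          _ ≤ _ := by gcongr)
    refine hb.trans ?_
    have hvol : (volume : Measure ℝ).real (Set.Icc (-r) r) = 2 * r := by
      rw [Real.volume_real_Icc_of_le (by linarith)]; ring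
    rw [hvol]
    have e1 : m + 1 - ρ * (mOrder α : ℝ) + δ * ((mOrder β : ℝ) + (mOrder β' : ℝ)) = s + 1 := by
      rw [hs]; ring
    rw [e1, Real.rpow_add_one hn1.ne']
    have h6 : r ≤ (c * k) * (1 + ‖η₀‖) := by
      have := sqrt_sum_le η₀
      calc r ≤ c * (k * ‖η₀‖) := by rw [hr]; gcongr
        _ ≤ _ := by
          have : 0 ≤ c * (k : ℝ) := by positivity
          nlinarith
    have h7 : 0 ≤ C * (M ^ |s| * (1 + ‖η₀‖) ^ s) := by positivity
    calc _ ≤ C * (M ^ |s| * (1 + ‖η₀‖) ^ s) * (2 * ((c * k) * (1 + ‖η₀‖))) := by gcongr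
      _ = _ := by ring
  · intro t ht
    have ht' : r < |t| := by
      by_contra hh
      exact ht (Set.mem_Icc.2 (abs_le.1 (not_lt.1 hh)))
    rw [dirDerivList_eq_zero _ (f := TAf ta)
      (U := {q : (((Fin k → ℝ) × ℝ) × ((Fin k → ℝ) × ℝ)) × ((Fin k → ℝ) × ℝ) | c * Real.sqrt (∑ i, q.2.1 i ^ 2) < |q.2.2|})
      (isOpen_lt (by fun_prop) (by fun_prop)) (fun q hq => hv _ _ _ _ (le_of_lt hq)) _ ht',
      zero_mul]

theorem part_iii (hSig : IsOpen Sig) (hΛ : IsOpen Λ)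
    (hA : ContDiffOn ℝ (⊤ : ℕ∞) (ANAf ana) (U5 Sig Λ))
    (α β β' : Fin k → ℕ) (K₀ : Set (Fin k → ℝ)) (hK₀ : IsCompact K₀) (hKS : K₀ ⊆ Sig)
      (R₀ : ℝ) (μ : ℝ) (hμ : μ ∈ Λ) (ν : ℝ) (hν : ν ∈ Λ) (e : ℝ) (he : 0 < e) :
      ∃ δ' : ℝ, 0 < δ' ∧
        ∀ μ' ∈ Λ, ∀ ν' ∈ Λ, |μ' - μ| < δ' → |ν' - ν| < δ' →
          ∀ y₀ ∈ K₀, ∀ y₀' ∈ K₀, ∀ η₀ : Fin k → ℝ, ‖η₀‖ ≤ R₀ →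
            ‖mpderiv β (fun w => mpderiv β'
                (fun w' => mpderiv α (fun e' => ana w w' e' μ' ν') η₀) y₀') y₀ -
              mpderiv β (fun w => mpderiv β'
                (fun w' => mpderiv α (fun e' => ana w w' e' μ ν) η₀) y₀') y₀‖ ≤ e := by
  have hUo := U5_open hSig hΛ
  set D := dirDerivList ((jointList (sl β) (sl β') (sl α)).map fun v => (v, ((0 : ℝ), (0 : ℝ))))
        (ANAf ana) with hD
  have hDc : ContinuousOn D (U5 Sig Λ) := (dirDerivList_contDiffOn _ hUo hA).continuousOn
  have hKc : IsCompact ((K₀ ×ˢ K₀) ×ˢ Metric.closedBall (0 : Fin k → ℝ) R₀) :=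
    (hK₀.prod hK₀).prod (isCompact_closedBall _ _)
  have key : ∀ᶠ p in 𝓝 (μ, ν), ∀ q ∈ (K₀ ×ˢ K₀) ×ˢ Metric.closedBall (0 : Fin k → ℝ) R₀,
      ‖D (q, p) - D (q, (μ, ν))‖ < e := by
    apply hKc.eventually_forall_of_forall_eventually
    intro q hq
    have hq5 : (q, (μ, ν)) ∈ U5 Sig Λ := ⟨⟨⟨hKS hq.1.1, hKS hq.1.2⟩, trivial⟩, hμ, hν⟩
    have hca := hDc.continuousAt (hUo.mem_nhds hq5)
    have h1 : ContinuousAt (fun z : (ℝ × ℝ) × (((Fin k → ℝ) × (Fin k → ℝ)) × (Fin k → ℝ)) =>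
        D (z.2, z.1)) ((μ, ν), q) :=
      ContinuousAt.comp (g := D) (f := fun z : (ℝ × ℝ) × (((Fin k → ℝ) × (Fin k → ℝ)) ×
        (Fin k → ℝ)) => (z.2, z.1)) (x := ((μ, ν), q)) hca (by fun_prop)
    have h2 : ContinuousAt (fun z : (ℝ × ℝ) × (((Fin k → ℝ) × (Fin k → ℝ)) × (Fin k → ℝ)) =>
        D (z.2, (μ, ν))) ((μ, ν), q) :=
      ContinuousAt.comp (g := D) (f := fun z : (ℝ × ℝ) × (((Fin k → ℝ) × (Fin k → ℝ)) ×
        (Fin k → ℝ)) => (z.2, (μ, ν))) (x := ((μ, ν), q)) hca (by fun_prop)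
    have h3 := (h1.sub h2).norm
    have := h3.eventually_lt_const (u := e) (by simpa using he)
    exact this
  obtain ⟨δ', hδ', hb⟩ := Metric.eventually_nhds_iff.1 key
  refine ⟨δ', hδ', fun μ' hμ' ν' hν' h1 h2 y₀ hy y₀' hy' η₀ hη => ?_⟩
  rw [nested_ana hSig hΛ hA α β β' μ' hμ' ν' hν' y₀ (hKS hy) y₀' (hKS hy') η₀,
    nested_ana hSig hΛ hA α β β' μ hμ ν hν y₀ (hKS hy) y₀' (hKS hy') η₀]
  refine (hb (y := (μ', ν')) ?_ ((y₀, y₀'), η₀) ⟨⟨hy, hy'⟩, by simpa using hη⟩).le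
  rw [Prod.dist_eq, Real.dist_eq, Real.dist_eq]
  exact max_lt h1 h2

end main

open MeasureTheory Filter Topology

section four
variable {k : ℕ} {Sig : Set (Fin k → ℝ)} {Λ : Set ℝ}
  {ta : ((Fin k → ℝ) × ℝ) → ((Fin k → ℝ) × ℝ) → ((Fin k → ℝ) × ℝ) → ℂ}
  {u v : ((Fin k → ℝ) × ℝ) → ℂ}

/-- oscillating factor -/
noncomputable def osc (w w' η : (Fin k → ℝ) × ℝ) : ℂ :=
  Complex.exp (Complex.I * (dotP (w - w') η : ℂ))

theorem osc_norm (w w' η : (Fin k → ℝ) × ℝ) : ‖osc w w' η‖ = 1 := by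
  rw [osc, mul_comm, Complex.norm_exp_ofReal_mul_I]

theorem osc_continuous : Continuous fun q : (((Fin k → ℝ) × ℝ) × ((Fin k → ℝ) × ℝ)) ×
    ((Fin k → ℝ) × ℝ) => osc q.1.1 q.1.2 q.2 := by
  unfold osc dotP dotp
  fun_prop

/-- full integrand of the sesquilinear form -/
noncomputable def Hf (ta : ((Fin k → ℝ) × ℝ) → ((Fin k → ℝ) × ℝ) → ((Fin k → ℝ) × ℝ) → ℂ)
    (u v : ((Fin k → ℝ) × ℝ) → ℂ)
    (q : (((Fin k → ℝ) × ℝ) × ((Fin k → ℝ) × ℝ)) × ((Fin k → ℝ) × ℝ)) : ℂ :=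
  osc q.1.1 q.1.2 q.2 * ta q.1.1 q.1.2 q.2 * u q.1.2 * (starRingEnd ℂ) (v q.1.1)

theorem Hf_zero_u {q : (((Fin k → ℝ) × ℝ) × ((Fin k → ℝ) × ℝ)) × ((Fin k → ℝ) × ℝ)}
    (h : q.1.2 ∉ tsupport u) : Hf ta u v q = 0 := by
  simp [Hf, image_eq_zero_of_notMem_tsupport h]

theorem Hf_zero_v {q : (((Fin k → ℝ) × ℝ) × ((Fin k → ℝ) × ℝ)) × ((Fin k → ℝ) × ℝ)}
    (h : q.1.1 ∉ tsupport v) : Hf ta u v q = 0 := by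
  simp [Hf, image_eq_zero_of_notMem_tsupport h]

theorem Hf_continuous (hSig : IsOpen Sig) (hΛ : IsOpen Λ)
    (hT : ContDiffOn ℝ (⊤ : ℕ∞) (TAf ta) (((Sig ×ˢ Λ) ×ˢ (Sig ×ˢ Λ)) ×ˢ Set.univ))
    (hu : ContDiff ℝ (⊤ : ℕ∞) u) (hus : tsupport u ⊆ Sig ×ˢ Λ)
    (hv : ContDiff ℝ (⊤ : ℕ∞) v) (hvs : tsupport v ⊆ Sig ×ˢ Λ) :
    Continuous (Hf ta u v) := by
  rw [continuous_iff_continuousAt]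
  intro q
  by_cases h1 : q.1.2 ∈ tsupport u
  · by_cases h2 : q.1.1 ∈ tsupport v
    · have hYo : IsOpen (((Sig ×ˢ Λ) ×ˢ (Sig ×ˢ Λ)) ×ˢ (Set.univ : Set ((Fin k → ℝ) × ℝ))) :=
        ((hSig.prod hΛ).prod (hSig.prod hΛ)).prod isOpen_univ
      have h3 : ContinuousAt (TAf ta) q :=
        hT.continuousOn.continuousAt (hYo.mem_nhds ⟨⟨hvs h2, hus h1⟩, trivial⟩)
      have hu' := hu.continuous
      have hv' := hv.continuous
      have h4 : ContinuousAt (fun q : (((Fin k → ℝ) × ℝ) × ((Fin k → ℝ) × ℝ)) ×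
        ((Fin k → ℝ) × ℝ) => u q.1.2) q := by fun_prop
      have h5 : ContinuousAt (fun q : (((Fin k → ℝ) × ℝ) × ((Fin k → ℝ) × ℝ)) ×
        ((Fin k → ℝ) × ℝ) => (starRingEnd ℂ) (v q.1.1)) q := by fun_prop
      exact ((osc_continuous.continuousAt.mul h3).mul h4).mul h5
    · have : Hf ta u v =ᶠ[𝓝 q] fun _ => 0 := by
        have ho : IsOpen {q : (((Fin k → ℝ) × ℝ) × ((Fin k → ℝ) × ℝ)) × ((Fin k → ℝ) × ℝ) |
          q.1.1 ∈ (tsupport v)ᶜ} := (isClosed_tsupport v).isOpen_compl.preimage (by fun_prop)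
        filter_upwards [ho.mem_nhds h2] with q' hq' using Hf_zero_v hq'
      exact this.continuousAt
  · have : Hf ta u v =ᶠ[𝓝 q] fun _ => 0 := by
      have ho : IsOpen {q : (((Fin k → ℝ) × ℝ) × ((Fin k → ℝ) × ℝ)) × ((Fin k → ℝ) × ℝ) |
          q.1.2 ∈ (tsupport u)ᶜ} := (isClosed_tsupport u).isOpen_compl.preimage (by fun_prop)
      filter_upwards [ho.mem_nhds h1] with q' hq' using Hf_zero_u hq'
    exact this.continuousAt

/-- partial integral in `y₀'` -/
noncomputable def Qf (ta : ((Fin k → ℝ) × ℝ) → ((Fin k → ℝ) × ℝ) → ((Fin k → ℝ) × ℝ) → ℂ)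
    (u v : ((Fin k → ℝ) × ℝ) → ℂ) (w : (Fin k → ℝ) × ℝ) (ν : ℝ) (η : (Fin k → ℝ) × ℝ) : ℂ :=
  ∫ y' : Fin k → ℝ, Hf ta u v ((w, (y', ν)), η)

theorem Qf_continuous (hH : Continuous (Hf ta u v)) (huc : HasCompactSupport u) :
    Continuous fun z : (((Fin k → ℝ) × ℝ) × ℝ) × ((Fin k → ℝ) × ℝ) =>
      Qf ta u v z.1.1 z.1.2 z.2 := by
  have hK : IsCompact (Prod.fst '' tsupport u) := huc.isCompact.image continuous_fst
  have h := continuous_parametric_integral_of_continuous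
    (μ := (volume : Measure (Fin k → ℝ)))
    (f := fun (z : (((Fin k → ℝ) × ℝ) × ℝ) × ((Fin k → ℝ) × ℝ)) (y' : Fin k → ℝ) =>
      Hf ta u v ((z.1.1, (y', z.1.2)), z.2)) (hH.comp (by fun_prop)) hK
  refine h.congr fun z => ?_
  rw [Qf, setIntegral_eq_integral_of_forall_compl_eq_zero]
  intro y' hy'
  exact Hf_zero_u fun hh => hy' ⟨_, hh, rfl⟩

theorem Qf_zero_v {w : (Fin k → ℝ) × ℝ} (h : w ∉ tsupport v) (ν : ℝ) (η : (Fin k → ℝ) × ℝ) :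
    Qf ta u v w ν η = 0 := by
  have : (fun y' : Fin k → ℝ => Hf ta u v ((w, (y', ν)), η)) = fun _ => 0 := by
    funext y'; exact Hf_zero_v h
  rw [Qf, this]; simp

theorem Qf_zero_u (w : (Fin k → ℝ) × ℝ) {ν : ℝ} (h : ν ∉ Prod.snd '' tsupport u)
    (η : (Fin k → ℝ) × ℝ) : Qf ta u v w ν η = 0 := by
  have : (fun y' : Fin k → ℝ => Hf ta u v ((w, (y', ν)), η)) = fun _ => 0 := by
    funext y'; exact Hf_zero_u fun hh => h ⟨_, hh, rfl⟩
  rw [Qf, this]; simp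



theorem osc_fderiv (w η : (Fin k → ℝ) × ℝ) (ν : ℝ) (j : Fin k) (y : Fin k → ℝ) :
    DifferentiableAt ℝ (fun y' : Fin k → ℝ => osc w (y', ν) η) y ∧
    fderiv ℝ (fun y' : Fin k → ℝ => osc w (y', ν) η) y (Pi.single j 1)
      = -(Complex.I * (η.1 j : ℂ)) * osc w (y, ν) η := by
  have hd : DifferentiableAt ℝ (fun y' : Fin k → ℝ => osc w (y', ν) η) y := by
    have h1 : DifferentiableAt ℝ (fun y' : Fin k → ℝ => dotP (w - (y', ν)) η) y := by
      unfold dotP dotp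
      simp only [Prod.fst_sub, Prod.snd_sub, Pi.sub_apply]
      fun_prop
    have h2 : DifferentiableAt ℝ (fun y' : Fin k → ℝ => (dotP (w - (y', ν)) η : ℂ)) y :=
      Complex.ofRealCLM.differentiableAt.comp y h1
    unfold osc
    exact (h2.const_mul _).cexp
  refine ⟨hd, ?_⟩
  rw [← hd.lineDeriv_eq_fderiv]
  unfold lineDeriv
  have e : (fun t : ℝ => osc w (y + t • Pi.single j 1, ν) η)
      = fun t : ℝ => osc w (y, ν) η * Complex.exp (-(Complex.I * (η.1 j : ℂ)) * (t : ℂ)) := by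
    funext t
    unfold osc
    rw [← Complex.exp_add]
    congr 1
    have : dotP (w - (y + t • Pi.single j 1, ν)) η = dotP (w - (y, ν)) η - t * η.1 j := by
      simp only [dotP, dotp, Prod.fst_sub, Prod.snd_sub, Pi.sub_apply, Pi.add_apply,
        Pi.smul_apply, smul_eq_mul]
      have : ∑ i, (w.1 i - (y i + t * (Pi.single j 1 : Fin k → ℝ) i)) * η.1 i
          = ∑ i, (w.1 i - y i) * η.1 i - t * η.1 j := by
        have h2 : t * η.1 j = ∑ i, t * (Pi.single j 1 : Fin k → ℝ) i * η.1 i := by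
          simp [Pi.single_apply]
        rw [h2, ← Finset.sum_sub_distrib]
        refine Finset.sum_congr rfl fun i _ => by ring
      rw [this]; ring
    rw [this]
    push_cast; ring
  rw [e]
  have h3 : HasDerivAt (fun t : ℝ => Complex.exp (-(Complex.I * (η.1 j : ℂ)) * (t : ℂ)))
      (-(Complex.I * (η.1 j : ℂ))) 0 := by
    have h4 : HasDerivAt (fun t : ℝ => -(Complex.I * (η.1 j : ℂ)) * (t : ℂ))
        (-(Complex.I * (η.1 j : ℂ))) 0 := by
      simpa using (Complex.ofRealCLM.hasDerivAt (x := (0:ℝ))).const_mul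
        (-(Complex.I * (η.1 j : ℂ)))
    simpa using h4.cexp
  rw [(h3.const_mul _).deriv]; ring

theorem slice_cs {G : (Fin k → ℝ) × ℝ → ℂ} (hG : HasCompactSupport G) (ν : ℝ) :
    HasCompactSupport fun y' : Fin k → ℝ => G (y', ν) := by
  have hK : IsCompact (Prod.fst '' tsupport G) := hG.isCompact.image continuous_fst
  refine HasCompactSupport.intro hK fun y' hy' => ?_
  exact image_eq_zero_of_notMem_tsupport fun hh => hy' ⟨_, hh, rfl⟩

theorem osc_slice_continuous (w η : (Fin k → ℝ) × ℝ) (ν : ℝ) :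
    Continuous fun y' : Fin k → ℝ => osc w (y', ν) η :=
  osc_continuous.comp (f := fun y' : Fin k → ℝ => ((w, (y', ν)), η)) (by fun_prop)

theorem ibp_one {G : (Fin k → ℝ) × ℝ → ℂ} (hG : ContDiff ℝ (⊤ : ℕ∞) G)
    (hGc : HasCompactSupport G) (w η : (Fin k → ℝ) × ℝ) (ν : ℝ) (j : Fin k) :
    (Complex.I * (η.1 j : ℂ)) * ∫ y' : Fin k → ℝ, osc w (y', ν) η * G (y', ν)
      = ∫ y' : Fin k → ℝ, osc w (y', ν) η *
        dirDeriv ((Pi.single j 1, 0) : (Fin k → ℝ) × ℝ) G (y', ν) := by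
  have hoc := osc_slice_continuous w η ν
  have hGs : Continuous fun y' : Fin k → ℝ => G (y', ν) := hG.continuous.comp (by fun_prop)
  have hGd : ∀ y', fderiv ℝ (fun y' : Fin k → ℝ => G (y', ν)) y' (Pi.single j 1)
      = dirDeriv ((Pi.single j 1, 0) : (Fin k → ℝ) × ℝ) G (y', ν) := by
    intro y'
    have h1 : DifferentiableAt ℝ G (y', ν) := hG.contDiffAt.differentiableAt (by simp)
    have := (HasFDerivAt.comp (g := G) (f := fun e : Fin k → ℝ => (e, ν)) y' h1.hasFDerivAt
      (hasFDerivAt_prodMk_left (𝕜 := ℝ) y' ν)).fderiv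
    have h2 : fderiv ℝ (fun y' : Fin k → ℝ => G (y', ν)) y'
        = (fderiv ℝ G (y', ν)).comp (ContinuousLinearMap.inl ℝ (Fin k → ℝ) ℝ) := this
    rw [h2]; rfl
  have hGD : ContDiff ℝ (⊤ : ℕ∞) (dirDeriv ((Pi.single j 1, 0) : (Fin k → ℝ) × ℝ) G) := by
    rw [← contDiffOn_univ]
    exact dirDeriv_contDiffOn _ isOpen_univ hG.contDiffOn
  have hGDc : HasCompactSupport (dirDeriv ((Pi.single j 1, 0) : (Fin k → ℝ) × ℝ) G) :=
    hGc.fderiv_apply ℝ _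
  have hGDs : Continuous fun y' : Fin k → ℝ =>
      dirDeriv ((Pi.single j 1, 0) : (Fin k → ℝ) × ℝ) G (y', ν) :=
    hGD.continuous.comp (by fun_prop)
  have key := integral_mul_fderiv_eq_neg_fderiv_mul_of_integrable (𝕜 := ℂ)
    (μ := (volume : Measure (Fin k → ℝ)))
    (f := fun y' : Fin k → ℝ => osc w (y', ν) η) (g := fun y' : Fin k → ℝ => G (y', ν))
    (v := Pi.single j 1) ?_ ?_ ?_ ?_ ?_
  · simp only [hGd, (osc_fderiv w η ν j _).2] at key
    rw [key, ← integral_const_mul, ← integral_neg]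
    congr 1; funext y'; ring
  · simp only [(osc_fderiv w η ν j _).2]
    exact Continuous.integrable_of_hasCompactSupport (by fun_prop) (slice_cs hGc ν).mul_left
  · simp only [hGd]
    exact Continuous.integrable_of_hasCompactSupport (by fun_prop) (slice_cs hGDc ν).mul_left
  · exact Continuous.integrable_of_hasCompactSupport (by fun_prop) (slice_cs hGc ν).mul_left
  · exact fun x _ => (osc_fderiv w η ν j x).1
  · intro x _
    have h1 : DifferentiableAt ℝ G (x, ν) := hG.contDiffAt.differentiableAt (by simp)
    exact (HasFDerivAt.comp (g := G) (f := fun e : Fin k → ℝ => (e, ν)) x h1.hasFDerivAt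
      (hasFDerivAt_prodMk_left (𝕜 := ℝ) x ν)).differentiableAt

theorem ibp_iter (n : ℕ) (w η : (Fin k → ℝ) × ℝ) (ν : ℝ) (j : Fin k) :
    ∀ {G : (Fin k → ℝ) × ℝ → ℂ}, ContDiff ℝ (⊤ : ℕ∞) G → HasCompactSupport G →
    (Complex.I * (η.1 j : ℂ)) ^ n * ∫ y' : Fin k → ℝ, osc w (y', ν) η * G (y', ν)
      = ∫ y' : Fin k → ℝ, osc w (y', ν) η *
        dirDerivList (List.replicate n ((Pi.single j 1, 0) : (Fin k → ℝ) × ℝ)) G (y', ν) := by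
  induction n with
  | zero => intro G _ _; simp [dirDerivList]
  | succ n ih =>
    intro G hG hGc
    have hGD : ContDiff ℝ (⊤ : ℕ∞) (dirDeriv ((Pi.single j 1, 0) : (Fin k → ℝ) × ℝ) G) := by
      rw [← contDiffOn_univ]
      exact dirDeriv_contDiffOn _ isOpen_univ hG.contDiffOn
    have hGDc : HasCompactSupport (dirDeriv ((Pi.single j 1, 0) : (Fin k → ℝ) × ℝ) G) :=
      hGc.fderiv_apply ℝ _
    rw [dirDerivList_replicate_comm, ← ih hGD hGDc, ← ibp_one hG hGc, pow_succ]
    ring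

end four

open MeasureTheory Filter Topology

section five
variable {k : ℕ} {Sig : Set (Fin k → ℝ)} {Λ : Set ℝ}
  {ta : ((Fin k → ℝ) × ℝ) → ((Fin k → ℝ) × ℝ) → ((Fin k → ℝ) × ℝ) → ℂ}
  {u v : ((Fin k → ℝ) × ℝ) → ℂ}

/-- amplitude times test function -/
noncomputable def Bf (ta : ((Fin k → ℝ) × ℝ) → ((Fin k → ℝ) × ℝ) → ((Fin k → ℝ) × ℝ) → ℂ)
    (u : ((Fin k → ℝ) × ℝ) → ℂ) (w η : (Fin k → ℝ) × ℝ) : ((Fin k → ℝ) × ℝ) → ℂ :=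
  fun w' => TAf ta ((w, w'), η) * u w'

theorem TAf_slice (hT : ContDiffOn ℝ (⊤ : ℕ∞) (TAf ta) (((Sig ×ˢ Λ) ×ˢ (Sig ×ˢ Λ)) ×ˢ Set.univ))
    {w : (Fin k → ℝ) × ℝ} (hw : w ∈ Sig ×ˢ Λ) (η : (Fin k → ℝ) × ℝ) :
    ContDiffOn ℝ (⊤ : ℕ∞) (fun w' => TAf ta ((w, w'), η)) (Sig ×ˢ Λ) :=
  hT.comp (f := fun w' : (Fin k → ℝ) × ℝ => ((w, w'), η)) (by fun_prop)
    (fun _ h => ⟨⟨hw, h⟩, trivial⟩)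

theorem Bf_contDiff (hSig : IsOpen Sig) (hΛ : IsOpen Λ)
    (hT : ContDiffOn ℝ (⊤ : ℕ∞) (TAf ta) (((Sig ×ˢ Λ) ×ˢ (Sig ×ˢ Λ)) ×ˢ Set.univ))
    (hu : ContDiff ℝ (⊤ : ℕ∞) u) (hus : tsupport u ⊆ Sig ×ˢ Λ)
    {w : (Fin k → ℝ) × ℝ} (hw : w ∈ Sig ×ˢ Λ) (η : (Fin k → ℝ) × ℝ) :
    ContDiff ℝ (⊤ : ℕ∞) (Bf ta u w η) := by
  rw [contDiff_iff_contDiffAt]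
  intro w'
  by_cases h : w' ∈ tsupport u
  · exact ((TAf_slice hT hw η).mul hu.contDiffOn).contDiffAt ((hSig.prod hΛ).mem_nhds (hus h))
  · have : Bf ta u w η =ᶠ[𝓝 w'] fun _ => 0 := by
      filter_upwards [(isClosed_tsupport u).isOpen_compl.mem_nhds h] with z hz
      simp [Bf, image_eq_zero_of_notMem_tsupport hz]
    exact contDiffAt_const.congr_of_eventuallyEq this

theorem Bf_cs (huc : HasCompactSupport u) (w η : (Fin k → ℝ) × ℝ) :
    HasCompactSupport (Bf ta u w η) := huc.mul_left

theorem u_bound (hu : ContDiff ℝ (⊤ : ℕ∞) u) (huc : HasCompactSupport u)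
    (b : (Fin k → ℝ) × ℝ) (n : ℕ) :
    ∃ D : ℝ, 0 ≤ D ∧ ∀ i ≤ n, ∀ x, ‖dirDerivList (List.replicate i b) u x‖ ≤ D := by
  have h : ∀ i, ∃ D : ℝ, ∀ x, ‖dirDerivList (List.replicate i b) u x‖ ≤ D := by
    intro i
    have hc : Continuous (dirDerivList (List.replicate i b) u) := by
      have := dirDerivList_contDiffOn (List.replicate i b) isOpen_univ hu.contDiffOn
      exact (contDiffOn_univ.1 this).continuous
    refine hc.bounded_above_of_compact_support (HasCompactSupport.intro huc.isCompact ?_)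
    intro x hx
    exact dirDerivList_eq_zero _ (isClosed_tsupport u).isOpen_compl
      (fun y hy => image_eq_zero_of_notMem_tsupport hy) x hx
  choose D hD using h
  have hD0 : ∀ i, 0 ≤ D i := fun i => (norm_nonneg _).trans (hD i 0)
  refine ⟨∑ i ∈ Finset.range (n + 1), D i, Finset.sum_nonneg fun i _ => hD0 i, ?_⟩
  intro i hi x
  exact (hD i x).trans (Finset.single_le_sum (fun i _ => hD0 i) (Finset.mem_range.2 (by omega)))

theorem Bf_bound (hSig : IsOpen Sig) (hΛ : IsOpen Λ) {m ρ δ : ℝ}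
    (hta : IsAmplitudeP (Sig ×ˢ Λ) m ρ δ ta)
    (hu : ContDiff ℝ (⊤ : ℕ∞) u) (huc : HasCompactSupport u) (hus : tsupport u ⊆ Sig ×ˢ Λ)
    (hvc : HasCompactSupport v) (hvs : tsupport v ⊆ Sig ×ˢ Λ) (n : ℕ) (j : Fin k) :
    ∃ C : ℝ, 0 ≤ C ∧ ∀ w ∈ tsupport v, ∀ η w' : (Fin k → ℝ) × ℝ,
      ‖dirDerivList (List.replicate n ((Pi.single j 1, 0) : (Fin k → ℝ) × ℝ)) (Bf ta u w η) w'‖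
        ≤ C * (1 + eNormP η) ^ (m + max δ 0 * n) := by
  obtain ⟨D, hD0, hD⟩ := u_bound hu huc ((Pi.single j 1, 0) : (Fin k → ℝ) × ℝ) n
  have hK : IsCompact (tsupport u ∪ tsupport v) := huc.isCompact.union hvc.isCompact
  have hKY : tsupport u ∪ tsupport v ⊆ Sig ×ˢ Λ := Set.union_subset hus hvs
  have hC := fun i : ℕ => nested_ta hSig hΛ hta (fun _ => 0) (fun _ => 0)
    (Pi.single j.castSucc i) _ hK hKY
  choose C hC0 hC using hC
  have hS0 : 0 ≤ ∑ i ∈ Finset.range (n + 1), C i := Finset.sum_nonneg fun i _ => hC0 i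
  refine ⟨2 ^ n * ((∑ i ∈ Finset.range (n + 1), C i) * D), by positivity, ?_⟩
  intro w hw η w'
  have he := eNormP_nonneg η
  by_cases hw' : w' ∈ tsupport u
  · have hb : basisP k j.castSucc = ((Pi.single j 1, 0) : (Fin k → ℝ) × ℝ) := by
      simp [basisP]
    have key := leibniz_bound n ((Pi.single j 1, 0) : (Fin k → ℝ) × ℝ) (hSig.prod hΛ)
      ((∑ i ∈ Finset.range (n + 1), C i) * (1 + eNormP η) ^ (m + max δ 0 * n)) D
      (by positivity) w' (hus hw') (TAf_slice hta.1 (hvs hw) η) hu.contDiffOn ?_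
      (fun i hi => hD i hi w')
    · refine key.trans (le_of_eq (by ring))
    · intro i hi
      have h1 := hC i w (Or.inr hw) w' (Or.inl hw') η
      rw [mlist_zero, mlist_single, mOrder_zero, mOrder_single, hb] at h1
      have h2 := nested_eq_joint ([] : List ((Fin k → ℝ) × ℝ))
        (List.replicate i ((Pi.single j 1, 0) : (Fin k → ℝ) × ℝ)) ([] : List ((Fin k → ℝ) × ℝ))
        (hSig.prod hΛ) (hSig.prod hΛ) (G := TAf ta) hta.1 η w (hvs hw) w' (hus hw')
      rw [← h2] at h1
      refine (show _ ≤ _ from h1).trans ?_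
      have hle : C i ≤ ∑ i ∈ Finset.range (n + 1), C i :=
        Finset.single_le_sum (fun i _ => hC0 i) (Finset.mem_range.2 (by omega))
      have hi' : (i : ℝ) ≤ n := by exact_mod_cast hi
      have hex : m - ρ * ((0 : ℕ) : ℝ) + δ * (((0 : ℕ) : ℝ) + (i : ℝ)) ≤ m + max δ 0 * n := by
        have h3 : δ * i ≤ max δ 0 * n := by
          calc δ * i ≤ max δ 0 * i := by gcongr; exact le_max_left _ _
            _ ≤ _ := by gcongr
        simp only [Nat.cast_zero]
        linarith
      have := Real.rpow_le_rpow_of_exponent_le (by linarith : 1 ≤ 1 + eNormP η) hex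
      exact mul_le_mul hle this (by positivity) hS0
  · rw [dirDerivList_eq_zero _ (isClosed_tsupport u).isOpen_compl
      (fun y hy => by simp [Bf, image_eq_zero_of_notMem_tsupport hy]) w' hw']
    rw [norm_zero]; positivity

theorem Qf_eq (w : (Fin k → ℝ) × ℝ) (ν : ℝ) (η : (Fin k → ℝ) × ℝ) :
    Qf ta u v w ν η = (∫ y' : Fin k → ℝ, osc w (y', ν) η * Bf ta u w η (y', ν)) *
      (starRingEnd ℂ) (v w) := by
  rw [Qf, ← integral_mul_const]
  congr 1; funext y'
  simp only [Hf, Bf, TAf]; ring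

theorem Qf_decay_j (hSig : IsOpen Sig) (hΛ : IsOpen Λ) {m ρ δ : ℝ}
    (hta : IsAmplitudeP (Sig ×ˢ Λ) m ρ δ ta)
    (hu : ContDiff ℝ (⊤ : ℕ∞) u) (huc : HasCompactSupport u) (hus : tsupport u ⊆ Sig ×ˢ Λ)
    (hv : ContDiff ℝ (⊤ : ℕ∞) v)
    (hvc : HasCompactSupport v) (hvs : tsupport v ⊆ Sig ×ˢ Λ) (n : ℕ) (j : Fin k) :
    ∃ C : ℝ, 0 ≤ C ∧ ∀ (w : (Fin k → ℝ) × ℝ) (ν : ℝ) (η : (Fin k → ℝ) × ℝ),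
      |η.1 j| ^ n * ‖Qf ta u v w ν η‖ ≤ C * (1 + eNormP η) ^ (m + max δ 0 * n) := by
  obtain ⟨C, hC0, hC⟩ := Bf_bound hSig hΛ hta hu huc hus hvc hvs n j
  obtain ⟨V, hV⟩ := hv.continuous.bounded_above_of_compact_support hvc
  have hV0 : 0 ≤ V := (norm_nonneg _).trans (hV 0)
  have hKc : IsCompact (Prod.fst '' tsupport u) := huc.isCompact.image continuous_fst
  refine ⟨C * (volume (Prod.fst '' tsupport u)).toReal * V, by positivity, ?_⟩
  intro w ν η
  have he := eNormP_nonneg η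
  by_cases hw : w ∈ tsupport v
  · have hi := ibp_iter n w η ν j (Bf_contDiff hSig hΛ hta.1 hu hus (hvs hw) η)
      (Bf_cs huc w η)
    have h1 : |η.1 j| ^ n * ‖Qf ta u v w ν η‖ = ‖(Complex.I * (η.1 j : ℂ)) ^ n *
        ∫ y' : Fin k → ℝ, osc w (y', ν) η * Bf ta u w η (y', ν)‖ * ‖v w‖ := by
      rw [Qf_eq, norm_mul, norm_mul, norm_pow, norm_mul, Complex.norm_I, RCLike.norm_conj]
      simp [mul_assoc]
    rw [h1, hi]
    have h2 : ‖∫ y' : Fin k → ℝ, osc w (y', ν) η *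
        dirDerivList (List.replicate n ((Pi.single j 1, 0) : (Fin k → ℝ) × ℝ))
          (Bf ta u w η) (y', ν)‖
        ≤ C * (1 + eNormP η) ^ (m + max δ 0 * n) * (volume (Prod.fst '' tsupport u)).toReal := by
      rw [← setIntegral_eq_integral_of_forall_compl_eq_zero (s := Prod.fst '' tsupport u)]
      · refine (norm_setIntegral_le_of_norm_le_const hKc.measure_lt_top ?_)
        intro y' _
        rw [norm_mul, osc_norm, one_mul]
        exact hC w hw η _
      · intro y' hy'
        rw [dirDerivList_eq_zero _ (isClosed_tsupport u).isOpen_compl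
          (fun y hy => by simp [Bf, image_eq_zero_of_notMem_tsupport hy]) (y', ν)
            (fun hh => hy' ⟨_, hh, rfl⟩), mul_zero]
    calc _ ≤ (C * (1 + eNormP η) ^ (m + max δ 0 * n) *
          (volume (Prod.fst '' tsupport u)).toReal) * V :=
          mul_le_mul h2 (hV w) (norm_nonneg _) (by positivity)
      _ = _ := by ring
  · rw [Qf_zero_v hw, norm_zero, mul_zero]; positivity

theorem Qf_decay (hSig : IsOpen Sig) (hΛ : IsOpen Λ) {m ρ δ : ℝ} (hδ : δ < 1)
    (hta : IsAmplitudeP (Sig ×ˢ Λ) m ρ δ ta) {c : ℝ} (hc : 0 < c)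
    (hcone : ∀ y y' : (Fin k → ℝ) × ℝ, ∀ η₀ : Fin k → ℝ, ∀ ηd : ℝ,
      c * Real.sqrt (∑ i, η₀ i ^ 2) ≤ |ηd| → ta y y' (η₀, ηd) = 0)
    (hu : ContDiff ℝ (⊤ : ℕ∞) u) (huc : HasCompactSupport u) (hus : tsupport u ⊆ Sig ×ˢ Λ)
    (hv : ContDiff ℝ (⊤ : ℕ∞) v)
    (hvc : HasCompactSupport v) (hvs : tsupport v ⊆ Sig ×ˢ Λ) (r : ℝ) :
    ∃ C : ℝ, 0 ≤ C ∧ ∀ (w : (Fin k → ℝ) × ℝ) (ν : ℝ) (η : (Fin k → ℝ) × ℝ),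
      ‖Qf ta u v w ν η‖ ≤ C * (1 + ‖η‖) ^ (-r) := by
  set d : ℝ := max δ 0 with hd
  have hd1 : 0 < 1 - d := by
    have : d < 1 := max_lt hδ one_pos
    linarith
  have hd0 : 0 ≤ d := le_max_right _ _
  obtain ⟨n, hn⟩ := exists_nat_ge ((m + max r 0) / (1 - d))
  rw [div_le_iff₀ hd1] at hn
  choose C₁ hC₁0 hC₁ using fun j => Qf_decay_j hSig hΛ hta hu huc hus hv hvc hvs n j
  choose C₂ hC₂0 hC₂ using fun j => Qf_decay_j hSig hΛ hta hu huc hus hv hvc hvs 0 j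
  set M : ℝ := 1 + (1 + c) * k with hM
  have hM0 : 0 < M := by positivity
  have hS : 0 ≤ ∑ j, (C₁ j + C₂ j) := Finset.sum_nonneg fun j _ => add_nonneg (hC₁0 j) (hC₂0 j)
  refine ⟨(2 * M) ^ n * ∑ j, (C₁ j + C₂ j), by positivity, ?_⟩
  intro w ν η
  have he := eNormP_nonneg η
  rcases le_or_gt (c * Real.sqrt (∑ i, η.1 i ^ 2)) |η.2| with h | h
  · have : Qf ta u v w ν η = 0 := by
      have : (fun y' : Fin k → ℝ => Hf ta u v ((w, (y', ν)), η)) = fun _ => 0 := by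
        funext y'
        have := hcone w (y', ν) η.1 η.2 h
        simp [Hf, this]
      rw [Qf, this]; simp
    rw [this, norm_zero]; positivity
  · have hk : Nonempty (Fin k) := by
      by_contra hne
      rw [not_nonempty_iff] at hne
      simp at h
      exact absurd h (not_lt.2 (abs_nonneg _))
    obtain ⟨j, hj⟩ := Finite.exists_max fun j => |η.1 j|
    have hjn : ‖η.1‖ ≤ |η.1 j| := (pi_norm_le_iff_of_nonneg (abs_nonneg _)).2 fun i => hj i
    have hcn := eNormP_le_of_cone hc.le η h.le
    rw [← hM] at hcn
    set e := 1 + eNormP η with hee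
    have he1 : 1 ≤ e := by linarith
    have he0 : 0 < e := by linarith
    have hQ := norm_nonneg (Qf ta u v w ν η)
    have h1 : e ^ n ≤ (2 * M) ^ n * (1 + |η.1 j| ^ n) := by
      have : e ≤ 2 * M * max 1 |η.1 j| := by
        refine hcn.trans ?_
        have h3 := le_max_left 1 |η.1 j|
        have h4 := le_max_right 1 |η.1 j|
        nlinarith
      calc e ^ n ≤ (2 * M * max 1 |η.1 j|) ^ n := by gcongr
        _ = (2 * M) ^ n * (max 1 |η.1 j|) ^ n := mul_pow _ _ _
        _ ≤ _ := by
          gcongr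
          rcases max_cases 1 |η.1 j| with ⟨h5, _⟩ | ⟨h5, _⟩ <;> rw [h5]
          · simp
          · simp
    have h2 := hC₁ j w ν η
    have h3 := hC₂ j w ν η
    simp only [pow_zero, one_mul, CharP.cast_eq_zero, mul_zero, add_zero] at h3
    have h4 : ‖Qf ta u v w ν η‖ ≤ C₂ j * e ^ (m + d * n) := by
      refine h3.trans ?_
      have := hC₂0 j
      gcongr
      · linarith [mul_nonneg hd0 (Nat.cast_nonneg (α := ℝ) n)]
    have hCj : C₁ j + C₂ j ≤ ∑ j, (C₁ j + C₂ j) :=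
      Finset.single_le_sum (f := fun j => C₁ j + C₂ j)
        (fun j _ => add_nonneg (hC₁0 j) (hC₂0 j)) (Finset.mem_univ j)
    have h5 : e ^ n * ‖Qf ta u v w ν η‖ ≤
        (2 * M) ^ n * (∑ j, (C₁ j + C₂ j)) * e ^ (m + d * n) := by
      calc _ ≤ (2 * M) ^ n * (1 + |η.1 j| ^ n) * ‖Qf ta u v w ν η‖ := by gcongr
        _ = (2 * M) ^ n * (‖Qf ta u v w ν η‖ + |η.1 j| ^ n * ‖Qf ta u v w ν η‖) := by ring
        _ ≤ (2 * M) ^ n * (C₂ j * e ^ (m + d * n) + C₁ j * e ^ (m + d * n)) := by gcongr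
        _ = (2 * M) ^ n * (C₁ j + C₂ j) * e ^ (m + d * n) := by ring
        _ ≤ _ := by gcongr
    have h6 : ‖Qf ta u v w ν η‖ ≤
        (2 * M) ^ n * (∑ j, (C₁ j + C₂ j)) * e ^ (m + d * n - n) := by
      rw [Real.rpow_sub he0, Real.rpow_natCast, ← mul_div_assoc, le_div_iff₀ (by positivity)]
      linarith
    refine h6.trans ?_
    have h7 : e ^ (m + d * n - n) ≤ e ^ (-(max r 0)) :=
      Real.rpow_le_rpow_of_exponent_le he1 (by linarith)
    have h8 : e ^ (-(max r 0)) ≤ (1 + ‖η‖) ^ (-(max r 0)) := by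
      refine Real.rpow_le_rpow_of_nonpos (by positivity) ?_ (by simp)
      rw [hee]; linarith [norm_le_eNormP η]
    have h9 : (1 + ‖η‖) ^ (-(max r 0)) ≤ (1 + ‖η‖) ^ (-r) :=
      Real.rpow_le_rpow_of_exponent_le (by linarith [norm_nonneg η])
        (by linarith [le_max_left r 0])
    have := (h7.trans h8).trans h9
    gcongr

end five

open MeasureTheory Filter Topology

section six
variable {k : ℕ} {Sig : Set (Fin k → ℝ)} {Λ : Set ℝ}
  {ta : ((Fin k → ℝ) × ℝ) → ((Fin k → ℝ) × ℝ) → ((Fin k → ℝ) × ℝ) → ℂ}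
  {u v : ((Fin k → ℝ) × ℝ) → ℂ}

theorem decay_integrable (k : ℕ) :
    Integrable (fun η : (Fin k → ℝ) × ℝ => (1 + ‖η‖) ^ (-((k : ℝ) + 2))) := by
  have : (volume : Measure ((Fin k → ℝ) × ℝ)).IsAddHaarMeasure :=
    inferInstanceAs ((volume : Measure (Fin k → ℝ)).prod (volume : Measure ℝ)).IsAddHaarMeasure
  refine integrable_one_add_norm ?_
  simp only [Module.finrank_prod, Module.finrank_fin_fun, Module.finrank_self]
  push_cast; linarith

theorem decay_prod_integrable {Z : Type*} [TopologicalSpace Z] [MeasureSpace Z]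
    [OpensMeasurableSpace Z] [SecondCountableTopology Z] [SFinite (volume : Measure Z)]
    {F : Z × ((Fin k → ℝ) × ℝ) → ℂ} (hF : Continuous F) {C : ℝ}
    (hC : ∀ z η, ‖F (z, η)‖ ≤ C * (1 + ‖η‖) ^ (-((k : ℝ) + 2)))
    {S : Set Z} (hSm : MeasurableSet S) (hSf : volume S < ⊤)
    (hS : ∀ z ∉ S, ∀ η, F (z, η) = 0) :
    Integrable F ((volume : Measure Z).prod (volume : Measure ((Fin k → ℝ) × ℝ))) := by
  have h1 : Integrable (S.indicator fun _ : Z => C) :=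
    (integrable_indicator_iff hSm).2 (integrableOn_const hSf.ne)
  have h2 := h1.mul_prod (decay_integrable k)
  refine h2.mono' hF.aestronglyMeasurable (ae_of_all _ ?_)
  rintro ⟨z, η⟩
  by_cases hz : z ∈ S
  · simpa [Set.indicator_of_mem hz] using hC z η
  · simp [Set.indicator_of_notMem hz, hS z hz]

/-- integral in `η` -/
noncomputable def Tf (ta : ((Fin k → ℝ) × ℝ) → ((Fin k → ℝ) × ℝ) → ((Fin k → ℝ) × ℝ) → ℂ)
    (u v : ((Fin k → ℝ) × ℝ) → ℂ) (w : (Fin k → ℝ) × ℝ) (ν : ℝ) : ℂ :=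
  ∫ η : (Fin k → ℝ) × ℝ, Qf ta u v w ν η

theorem lemA (hH : Continuous (Hf ta u v)) (huc : HasCompactSupport u) (w : (Fin k → ℝ) × ℝ) :
    OpAmpP ta u w * (starRingEnd ℂ) (v w) =
      (((2 * Real.pi) ^ (-((k : ℝ) + 1)) : ℝ) : ℂ) *
        ∫ η : (Fin k → ℝ) × ℝ, ∫ ν : ℝ, Qf ta u v w ν η := by
  rw [OpAmpP, mul_assoc, ← integral_mul_const]
  congr 2
  funext η
  rw [← integral_mul_const]
  have h1 : Integrable (fun w' : (Fin k → ℝ) × ℝ => Hf ta u v ((w, w'), η)) := by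
    refine Continuous.integrable_of_hasCompactSupport (hH.comp (by fun_prop))
      (HasCompactSupport.intro huc.isCompact fun w' hw' => Hf_zero_u hw')
  exact integral_prod_symm _ h1

theorem lemB (hQ : Continuous fun z : (((Fin k → ℝ) × ℝ) × ℝ) × ((Fin k → ℝ) × ℝ) =>
      Qf ta u v z.1.1 z.1.2 z.2) (huc : HasCompactSupport u) {C : ℝ}
    (hC : ∀ (w : (Fin k → ℝ) × ℝ) (ν : ℝ) (η : (Fin k → ℝ) × ℝ),
      ‖Qf ta u v w ν η‖ ≤ C * (1 + ‖η‖) ^ (-((k : ℝ) + 2))) (w : (Fin k → ℝ) × ℝ) :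
    ∫ η : (Fin k → ℝ) × ℝ, ∫ ν : ℝ, Qf ta u v w ν η = ∫ ν : ℝ, Tf ta u v w ν := by
  have hK : IsCompact (Prod.snd '' tsupport u) := huc.isCompact.image continuous_snd
  have h := decay_prod_integrable (Z := ℝ)
    (F := fun z : ℝ × ((Fin k → ℝ) × ℝ) => Qf ta u v w z.1 z.2)
    (hQ.comp (f := fun z : ℝ × ((Fin k → ℝ) × ℝ) => ((w, z.1), z.2)) (by fun_prop))
    (fun z η => hC w z η) hK.measurableSet hK.measure_lt_top
    (fun z hz η => Qf_zero_u w hz η)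
  exact (integral_integral_swap (f := fun (ν : ℝ) (η : (Fin k → ℝ) × ℝ) => Qf ta u v w ν η) h).symm

theorem lemC (hQ : Continuous fun z : (((Fin k → ℝ) × ℝ) × ℝ) × ((Fin k → ℝ) × ℝ) =>
      Qf ta u v z.1.1 z.1.2 z.2) (huc : HasCompactSupport u) (hvc : HasCompactSupport v) {C : ℝ}
    (hC : ∀ (w : (Fin k → ℝ) × ℝ) (ν : ℝ) (η : (Fin k → ℝ) × ℝ),
      ‖Qf ta u v w ν η‖ ≤ C * (1 + ‖η‖) ^ (-((k : ℝ) + 2))) :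
    ∫ w : (Fin k → ℝ) × ℝ, ∫ ν : ℝ, Tf ta u v w ν =
      ∫ μ : ℝ, ∫ ν : ℝ, ∫ y₀ : Fin k → ℝ, Tf ta u v (y₀, μ) ν := by
  have hK : IsCompact (Prod.snd '' tsupport u) := huc.isCompact.image continuous_snd
  have hL : IsCompact (Prod.fst '' tsupport v) := hvc.isCompact.image continuous_fst
  have hKv : IsCompact (tsupport v ×ˢ (Prod.snd '' tsupport u)) := hvc.isCompact.prod hK
  have hLv : IsCompact ((Prod.fst '' tsupport v) ×ˢ (Prod.snd '' tsupport u)) := hL.prod hK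
  have h := decay_prod_integrable (Z := ((Fin k → ℝ) × ℝ) × ℝ) hQ
    (fun z η => hC z.1 z.2 η) hKv.measurableSet hKv.measure_lt_top
    (fun z hz η => by
      by_cases h1 : z.1 ∈ tsupport v
      · exact Qf_zero_u _ (fun h2 => hz ⟨h1, h2⟩) _
      · exact Qf_zero_v h1 _ _)
  have hT : Integrable (fun z : ((Fin k → ℝ) × ℝ) × ℝ => Tf ta u v z.1 z.2) := h.integral_prod_left
  have hS : Integrable (fun w : (Fin k → ℝ) × ℝ => ∫ ν : ℝ, Tf ta u v w ν) :=
    hT.integral_prod_left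
  refine (integral_prod_symm _ hS).trans ?_
  congr 1
  funext μ
  have h' := decay_prod_integrable (Z := (Fin k → ℝ) × ℝ)
    (F := fun z : ((Fin k → ℝ) × ℝ) × ((Fin k → ℝ) × ℝ) => Qf ta u v (z.1.1, μ) z.1.2 z.2)
    (hQ.comp (f := fun z : ((Fin k → ℝ) × ℝ) × ((Fin k → ℝ) × ℝ) =>
      (((z.1.1, μ), z.1.2), z.2)) (by fun_prop))
    (fun z η => hC _ _ η) hLv.measurableSet hLv.measure_lt_top
    (fun z hz η => by
      by_cases h1 : z.1 ∈ Prod.fst '' tsupport v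
      · exact Qf_zero_u (z.1, μ) (ν := z.2) (fun h2 => hz ⟨h1, h2⟩) η
      · exact Qf_zero_v (w := (z.1, μ)) (fun h2 => h1 ⟨(z.1, μ), h2, rfl⟩) z.2 η)
  have hT' : Integrable (fun z : (Fin k → ℝ) × ℝ => Tf ta u v (z.1, μ) z.2) :=
    h'.integral_prod_left
  exact integral_integral_swap (f := fun (y₀ : Fin k → ℝ) (ν : ℝ) => Tf ta u v (y₀, μ) ν) hT'

theorem lemD (hH : Continuous (Hf ta u v))
    (hQ : Continuous fun z : (((Fin k → ℝ) × ℝ) × ℝ) × ((Fin k → ℝ) × ℝ) =>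
      Qf ta u v z.1.1 z.1.2 z.2) (huc : HasCompactSupport u) {C : ℝ}
    (hC : ∀ (w : (Fin k → ℝ) × ℝ) (ν : ℝ) (η : (Fin k → ℝ) × ℝ),
      ‖Qf ta u v w ν η‖ ≤ C * (1 + ‖η‖) ^ (-((k : ℝ) + 2))) {c : ℝ}
    (hcone : ∀ y y' : (Fin k → ℝ) × ℝ, ∀ η₀ : Fin k → ℝ, ∀ ηd : ℝ,
      c * Real.sqrt (∑ i, η₀ i ^ 2) ≤ |ηd| → ta y y' (η₀, ηd) = 0)
    {ana : (Fin k → ℝ) → (Fin k → ℝ) → (Fin k → ℝ) → ℝ → ℝ → ℂ}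
    (hana : ∀ (y₀ y₀' η₀ : Fin k → ℝ) (μ ν : ℝ),
      ana y₀ y₀' η₀ μ ν = (((2 * Real.pi)⁻¹ : ℝ) : ℂ) *
        ∫ ηd : ℝ, ta (y₀, μ) (y₀', ν) (η₀, ηd) *
          Complex.exp (Complex.I * (((μ - ν) * ηd : ℝ) : ℂ)))
    (μ ν : ℝ) (y₀ : Fin k → ℝ) :
    OpAmp (fun p q η₀ => ana p q η₀ μ ν) (fun y₀' => u (y₀', ν)) y₀ *
            (starRingEnd ℂ) (v (y₀, μ)) =
      (((2 * Real.pi) ^ (-((k : ℝ) + 1)) : ℝ) : ℂ) * Tf ta u v (y₀, μ) ν := by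
  have hK : IsCompact (Prod.fst '' tsupport u) := huc.isCompact.image continuous_fst
  have hQint : Integrable (fun η : (Fin k → ℝ) × ℝ => Qf ta u v (y₀, μ) ν η) :=
    ((decay_integrable k).const_mul C).mono'
      (hQ.comp (f := fun η : (Fin k → ℝ) × ℝ => (((y₀, μ), ν), η))
        (by fun_prop)).aestronglyMeasurable (ae_of_all _ fun η => hC _ _ η)
  have hTT : Tf ta u v (y₀, μ) ν = ∫ η₀ : Fin k → ℝ, ∫ t : ℝ, Qf ta u v (y₀, μ) ν (η₀, t) :=
    integral_prod _ hQint
  have hpt : ∀ η₀ y' : Fin k → ℝ,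
      Complex.exp (Complex.I * (dotp (y₀ - y') η₀ : ℂ)) * ana y₀ y' η₀ μ ν * u (y', ν) *
        (starRingEnd ℂ) (v (y₀, μ)) =
      (((2 * Real.pi)⁻¹ : ℝ) : ℂ) * ∫ t : ℝ, Hf ta u v (((y₀, μ), (y', ν)), (η₀, t)) := by
    intro η₀ y'
    have h1 : ∀ t : ℝ, Hf ta u v (((y₀, μ), (y', ν)), (η₀, t)) =
        (Complex.exp (Complex.I * (dotp (y₀ - y') η₀ : ℂ)) * u (y', ν) *
        (starRingEnd ℂ) (v (y₀, μ))) * (ta (y₀, μ) (y', ν) (η₀, t) *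
          Complex.exp (Complex.I * (((μ - ν) * t : ℝ) : ℂ))) := by
      intro t
      have h2 : osc (y₀, μ) (y', ν) (η₀, t) = Complex.exp (Complex.I * (dotp (y₀ - y') η₀ : ℂ)) *
          Complex.exp (Complex.I * (((μ - ν) * t : ℝ) : ℂ)) := by
        rw [osc, ← Complex.exp_add]
        congr 1
        simp only [dotP, Prod.fst_sub, Prod.snd_sub]
        push_cast; ring
      simp only [Hf]
      rw [h2]; ring
    simp only [h1]
    rw [integral_const_mul, hana]
    ring
  have hsw : ∀ η₀ : Fin k → ℝ,
      ∫ y' : Fin k → ℝ, ∫ t : ℝ, Hf ta u v (((y₀, μ), (y', ν)), (η₀, t)) =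
      ∫ t : ℝ, Qf ta u v (y₀, μ) ν (η₀, t) := by
    intro η₀
    refine integral_integral_swap (f := fun (y' : Fin k → ℝ) (t : ℝ) =>
      Hf ta u v (((y₀, μ), (y', ν)), (η₀, t))) ?_
    refine Continuous.integrable_of_hasCompactSupport (hH.comp
      (f := fun z : (Fin k → ℝ) × ℝ => (((y₀, μ), (z.1, ν)), (η₀, z.2))) (by fun_prop))
      (HasCompactSupport.intro (hK.prod
        (isCompact_closedBall (0 : ℝ) (c * Real.sqrt (∑ i, η₀ i ^ 2)))) ?_)
    rintro ⟨y', t⟩ hz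
    by_cases h1 : y' ∈ Prod.fst '' tsupport u
    · have h2 : c * Real.sqrt (∑ i, η₀ i ^ 2) ≤ |t| := by
        by_contra h3
        exact hz ⟨h1, by simpa using (not_le.1 h3).le⟩
      simp [Hf, hcone (y₀, μ) (y', ν) η₀ t h2]
    · exact Hf_zero_u fun h2 => h1 ⟨_, h2, rfl⟩
  rw [OpAmp, mul_assoc, ← integral_mul_const]
  simp only [← integral_mul_const, hpt]
  simp only [integral_const_mul]
  simp only [hsw]
  rw [← hTT, ← mul_assoc]
  congr 1
  rw [← Complex.ofReal_mul]
  congr 1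
  have hpi : 0 < 2 * Real.pi := by positivity
  rw [← Real.rpow_neg_one, ← Real.rpow_add hpi]
  congr 1; ring

theorem part_iv (hSig : IsOpen Sig) (hΛ : IsOpen Λ) {m ρ δ : ℝ} (hδ : δ < 1)
    (hta : IsAmplitudeP (Sig ×ˢ Λ) m ρ δ ta) {c : ℝ} (hc : 0 < c)
    (hcone : ∀ y y' : (Fin k → ℝ) × ℝ, ∀ η₀ : Fin k → ℝ, ∀ ηd : ℝ,
      c * Real.sqrt (∑ i, η₀ i ^ 2) ≤ |ηd| → ta y y' (η₀, ηd) = 0)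
    {ana : (Fin k → ℝ) → (Fin k → ℝ) → (Fin k → ℝ) → ℝ → ℝ → ℂ}
    (hana : ∀ (y₀ y₀' η₀ : Fin k → ℝ) (μ ν : ℝ),
      ana y₀ y₀' η₀ μ ν = (((2 * Real.pi)⁻¹ : ℝ) : ℂ) *
        ∫ ηd : ℝ, ta (y₀, μ) (y₀', ν) (η₀, ηd) *
          Complex.exp (Complex.I * (((μ - ν) * ηd : ℝ) : ℂ)))
    (hu : ContDiff ℝ (⊤ : ℕ∞) u) (huc : HasCompactSupport u) (hus : tsupport u ⊆ Sig ×ˢ Λ)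
    (hv : ContDiff ℝ (⊤ : ℕ∞) v)
    (hvc : HasCompactSupport v) (hvs : tsupport v ⊆ Sig ×ˢ Λ) :
    ∫ w : (Fin k → ℝ) × ℝ, OpAmpP ta u w * (starRingEnd ℂ) (v w) =
        ∫ μ : ℝ, ∫ ν : ℝ, ∫ y₀ : Fin k → ℝ,
          OpAmp (fun p q η₀ => ana p q η₀ μ ν) (fun y₀' => u (y₀', ν)) y₀ *
            (starRingEnd ℂ) (v (y₀, μ)) := by
  have hH := Hf_continuous hSig hΛ hta.1 hu hus hv hvs
  have hQ := Qf_continuous hH huc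
  obtain ⟨C, -, hC⟩ := Qf_decay hSig hΛ hδ hta hc hcone hu huc hus hv hvc hvs ((k : ℝ) + 2)
  simp only [lemA hH huc, lemB hQ huc hC, lemD hH hQ huc hC hcone hana, integral_const_mul]
  rw [lemC hQ huc hvc hC]

end six

/-- Theorem 5.2 / `RH1`: if the amplitude `ã ∈ S^m_{ρ,δ,δ}(Y×Y×ℝ^d)`
on the cylinder `Y = Σ×Λ` vanishes for `|η_d| ≥ (1-ε)|η|`, then the fibre amplitudes
`ã^♮(y₀,y₀',η₀;y_d,y_d') = (2π)⁻¹ ∫ ã e^{i(y_d-y_d')η_d} dη_d` are well defined, lie in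
`S^{m+1}_{ρ,δ,δ}(Σ×Σ×ℝ^{d-1})` uniformly on compacts of `Λ×Λ`, depend continuously on
`(y_d,y_d')`, and give the kernel of `Ã` in the direct integral over `Λ`. -/
theorem statement19 {k : ℕ} (m ρ δ : ℝ) (hρ : 0 < ρ) (hδ : δ < 1)
    (Sig : Set (Fin k → ℝ)) (hSig : IsOpen Sig)
    (Λ : Set ℝ) (hΛ : IsOpen Λ) (hΛint : Λ.OrdConnected)
    (ta : ((Fin k → ℝ) × ℝ) → ((Fin k → ℝ) × ℝ) → ((Fin k → ℝ) × ℝ) → ℂ)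
    (hta : IsAmplitudeP (Sig ×ˢ Λ) m ρ δ ta)
    (ε : ℝ) (hε : 0 < ε)
    (hvanish : ∀ y y' : (Fin k → ℝ) × ℝ, ∀ η : (Fin k → ℝ) × ℝ,
      (1 - ε) * eNormP η ≤ |η.2| → ta y y' η = 0)
    (ana : (Fin k → ℝ) → (Fin k → ℝ) → (Fin k → ℝ) → ℝ → ℝ → ℂ)
    (hana : ∀ (y₀ y₀' η₀ : Fin k → ℝ) (μ ν : ℝ),
      ana y₀ y₀' η₀ μ ν = (((2 * Real.pi)⁻¹ : ℝ) : ℂ) *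
        ∫ ηd : ℝ, ta (y₀, μ) (y₀', ν) (η₀, ηd) *
          Complex.exp (Complex.I * (((μ - ν) * ηd : ℝ) : ℂ))) :
    -- (i) the `η_d`-integrand vanishes for `|η_d| ≥ c(ε)|η₀|`
    (∃ c : ℝ, ∀ y y' : (Fin k → ℝ) × ℝ, ∀ η₀ : Fin k → ℝ, ∀ ηd : ℝ,
      c * Real.sqrt (∑ i, η₀ i ^ 2) ≤ |ηd| → ta y y' (η₀, ηd) = 0) ∧
    -- (ii) each fibre `ã^♮(⋅,⋅,⋅;y_d,y_d')` lies in `S^{m+1}_{ρ,δ,δ}(Σ×Σ×ℝ^{d-1})` …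
    (∀ μ ∈ Λ, ∀ ν ∈ Λ,
      IsAmplitude Sig (m + 1) ρ δ (fun y₀ y₀' η₀ => ana y₀ y₀' η₀ μ ν)) ∧
    -- … with seminorms bounded uniformly on compact subsets of `Λ×Λ`
    (∀ (α β β' : Fin k → ℕ) (K₀ : Set (Fin k → ℝ)), IsCompact K₀ → K₀ ⊆ Sig →
      ∀ L : Set ℝ, IsCompact L → L ⊆ Λ → ∃ C : ℝ,
        ∀ μ ∈ L, ∀ ν ∈ L, ∀ y₀ ∈ K₀, ∀ y₀' ∈ K₀, ∀ η₀ : Fin k → ℝ,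
          ‖mpderiv β (fun w => mpderiv β'
              (fun w' => mpderiv α (fun e => ana w w' e μ ν) η₀) y₀') y₀‖ ≤
            C * (1 + ‖η₀‖) ^
              (m + 1 - ρ * (mOrder α : ℝ) + δ * ((mOrder β : ℝ) + (mOrder β' : ℝ)))) ∧
    -- (iii) every derivative of `ã^♮` is continuous in `(y_d,y_d')`, uniformly for
    -- `y₀, y₀'` in compacts of `Σ` and `|η₀| ≤ R₀`
    (∀ (α β β' : Fin k → ℕ) (K₀ : Set (Fin k → ℝ)), IsCompact K₀ → K₀ ⊆ Sig →
      ∀ R₀ : ℝ, 0 < R₀ → ∀ μ ∈ Λ, ∀ ν ∈ Λ, ∀ e : ℝ, 0 < e → ∃ δ' : ℝ, 0 < δ' ∧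
        ∀ μ' ∈ Λ, ∀ ν' ∈ Λ, |μ' - μ| < δ' → |ν' - ν| < δ' →
          ∀ y₀ ∈ K₀, ∀ y₀' ∈ K₀, ∀ η₀ : Fin k → ℝ, ‖η₀‖ ≤ R₀ →
            ‖mpderiv β (fun w => mpderiv β'
                (fun w' => mpderiv α (fun e' => ana w w' e' μ' ν') η₀) y₀') y₀ -
              mpderiv β (fun w => mpderiv β'
                (fun w' => mpderiv α (fun e' => ana w w' e' μ ν) η₀) y₀') y₀‖ ≤ e) ∧
    -- (iv) `ã^♮` is the kernel of `Ã` in the direct integral decomposition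
    (∀ u v : ((Fin k → ℝ) × ℝ) → ℂ,
      ContDiff ℝ (⊤ : ℕ∞) u → HasCompactSupport u → tsupport u ⊆ Sig ×ˢ Λ →
      ContDiff ℝ (⊤ : ℕ∞) v → HasCompactSupport v → tsupport v ⊆ Sig ×ˢ Λ →
      ∫ w : (Fin k → ℝ) × ℝ, OpAmpP ta u w * (starRingEnd ℂ) (v w) =
        ∫ μ : ℝ, ∫ ν : ℝ, ∫ y₀ : Fin k → ℝ,
          OpAmp (fun p q η₀ => ana p q η₀ μ ν) (fun y₀' => u (y₀', ν)) y₀ *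
            (starRingEnd ℂ) (v (y₀, μ))) := by
  obtain ⟨c, hc, hcone⟩ := cone_vanish ε hε ta hvanish
  have hA := ANAf_eq hana
  have hAs := ANAf_contDiffOn hSig hΛ hta.1 hc hcone hA
  refine ⟨⟨c, hcone⟩, ?_, ?_, ?_, ?_⟩
  · intro μ hμ ν hν
    refine ⟨fibre_contDiffOn hAs hμ hν, ?_⟩
    intro α β β' K hK hKS
    obtain ⟨C, hC⟩ := part_ii hSig hΛ hta hc hcone hA α β β' K hK hKS {μ, ν}
      ((Set.finite_singleton ν).insert μ).isCompact (by
        rintro x (rfl | rfl)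
        · exact hμ
        · exact hν)
    exact ⟨C, fun x hx x' hx' ξ => hC μ (by simp) ν (by simp) x hx x' hx' ξ⟩
  · intro α β β' K₀ hK₀ hKS L hL hLΛ
    exact part_ii hSig hΛ hta hc hcone hA α β β' K₀ hK₀ hKS L hL hLΛ
  · intro α β β' K₀ hK₀ hKS R₀ _ μ hμ ν hν e he
    exact part_iii hSig hΛ hAs α β β' K₀ hK₀ hKS R₀ μ hμ ν hν e he
  · intro u v hu huc hus hv hvc hvs
    exact part_iv hSig hΛ hδ hta hc hcone hana hu huc hus hv hvc hvs
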